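/- arXiv:1609.09378 — 7 statements merged into one kernel-verified Lean document; each statement's English description precedes it below -/
import Mathlib

section
/- Let V be a separable real Hilbert space, γ > 0, d ∈ V, and f : V → [0,∞] any function. Then (i) the Legendre transform of x ↦ f(x) + (γ/2)‖x−d‖² is y ↦ S_γ(f)(y/γ + d) + (γ/2)‖y/γ + d‖² − (γ/2)‖d‖²; (ii) the Legendre transform of y ↦ S_γ(f)(y/γ + d) + (γ/2)‖y/γ + d‖² − (γ/2)‖d‖² is x ↦ S_γ²(f)(x) + (γ/2)‖x−d‖². Consequently, x ↦ S_γ²(f)(x) + (γ/2)‖x−d‖² is the lower semicontinuous convex envelope of x ↦ f(x) + (γ/2)‖x−d‖², and 0 ≤ S_γ²(f) ≤ f pointwise. -/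
open scoped InnerProductSpace RealInnerProductSpace ENNReal Topology
open Filter

noncomputable section

/-- The S-transform `S_γ(f)(y) = sup_x ( -f(x) - (γ/2)‖x-y‖² )` for
extended-real-valued functions on a real inner product space. -/
def SgammaE {V : Type*} [NormedAddCommGroup V] [InnerProductSpace ℝ V]
    (γ : ℝ) (f : V → EReal) (y : V) : EReal :=
  ⨆ x : V, (-(f x) - (((γ / 2) * ‖x - y‖ ^ 2 : ℝ) : EReal))

/-- The S-transform of a `[0,∞]`-valued function. -/
def Sgamma {V : Type*} [NormedAddCommGroup V] [InnerProductSpace ℝ V]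
    (γ : ℝ) (f : V → ℝ≥0∞) (y : V) : EReal :=
  SgammaE γ (fun x => (f x : EReal)) y

/-- The twice iterated S-transform `S_γ²(f) = S_γ(S_γ(f))`. -/
def Sgamma2 {V : Type*} [NormedAddCommGroup V] [InnerProductSpace ℝ V]
    (γ : ℝ) (f : V → ℝ≥0∞) : V → EReal :=
  SgammaE γ (Sgamma γ f)

/-- The Legendre transform (Fenchel conjugate). -/
def legendre {V : Type*} [NormedAddCommGroup V] [InnerProductSpace ℝ V]
    (g : V → EReal) (y : V) : EReal :=
  ⨆ x : V, (((⟪x, y⟫_ℝ : ℝ) : EReal) - g x)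

/-- Convexity for extended-real-valued functions. -/
def EConvexOn {V : Type*} [NormedAddCommGroup V] [InnerProductSpace ℝ V]
    (h : V → EReal) : Prop :=
  ∀ x y : V, ∀ a b : ℝ, 0 ≤ a → 0 ≤ b → a + b = 1 →
    h (a • x + b • y) ≤ (a : EReal) * h x + (b : EReal) * h y

/-- `h` is the lower semicontinuous convex envelope of `g`: the largest
l.s.c. convex function below `g`. -/
def IsLscConvexEnvelope {V : Type*} [NormedAddCommGroup V] [InnerProductSpace ℝ V]
    (g h : V → EReal) : Prop :=
  LowerSemicontinuous h ∧ EConvexOn h ∧ (∀ x, h x ≤ g x) ∧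
    ∀ h' : V → EReal, LowerSemicontinuous h' → EConvexOn h' → (∀ x, h' x ≤ g x) →
      ∀ x, h' x ≤ h x

/-!
Completing the square, `⟪x, y⟫ - (γ/2)‖x - d‖²` equals
`-(γ/2)‖x - (y/γ + d)‖² + (γ/2)‖y/γ + d‖² - (γ/2)‖d‖²`. Both the Legendre transform and `S_γ` are
conjugations `k ↦ ⨆ x, c x y - k x` with respect to a cost `c`, so this single identity turns one
into the other, in both directions. Hence `S_γ²(f) + (γ/2)‖· - d‖²` is the biconjugate of
`f + (γ/2)‖· - d‖²`, and the Fenchel–Moreau theorem, a consequence of the separation of a point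
from a closed convex epigraph, identifies it as the envelope.
-/

theorem ereal_iSup_add_coe {ι : Sort*} (u : ι → EReal) (r : ℝ) :
    (⨆ i, u i) + (r : EReal) = ⨆ i, (u i + (r : EReal)) :=
  GaloisConnection.l_iSup (l := fun a : EReal => a + r) (u := fun a => a - r) fun _ _ =>
    (EReal.le_sub_iff_add_le (by simp) (by simp)).symm

theorem ereal_coe_sub_le_comm {r : ℝ} {a b : EReal} :
    (r : EReal) - a ≤ b ↔ (r : EReal) - b ≤ a := by
  induction a <;> induction b <;> simp [← EReal.coe_sub, add_comm]

section CostConjugate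

/-- The conjugate of `k` with respect to the cost `c`. It specializes to the Legendre transform for
the cost `⟪x, y⟫` and to the S-transform for the cost `-(γ/2)‖x - y‖²`. -/
def costConjugate {X Y : Type*} (c : X → Y → ℝ) (k : X → EReal) (y : Y) : EReal :=
  ⨆ x, ((c x y : EReal) - k x)

variable {X Y : Type*} {c : X → Y → ℝ} {k : X → EReal}

theorem costConjugate_le_iff {y : Y} {a : EReal} :
    costConjugate c k y ≤ a ↔ ∀ x, (c x y : EReal) - a ≤ k x :=
  iSup_le_iff.trans (forall_congr' fun _ => ereal_coe_sub_le_comm)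

theorem costConjugate_antitone : Antitone (costConjugate c) := fun _ _ h _ =>
  iSup_mono fun x => EReal.sub_le_sub le_rfl (h x)

theorem costConjugate_costConjugate_le {c' : Y → X → ℝ} (hc : ∀ x y, c' y x = c x y) :
    costConjugate c' (costConjugate c k) ≤ k := fun x =>
  iSup_le fun y => hc x y ▸ costConjugate_le_iff.1 le_rfl x

theorem costConjugate_comp_add {X' Y' : Type*} {c' : X' → Y' → ℝ} {φ : X → X'}
    (hφ : Function.Surjective φ) {ψ : Y → Y'} {a : X → ℝ} {b : Y → ℝ}
    (hc : ∀ x y, c x y - a x = c' (φ x) (ψ y) + b y) (k : X' → EReal) (y : Y) :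
    costConjugate c (fun x => k (φ x) + (a x : EReal)) y =
      costConjugate c' k (ψ y) + (b y : EReal) := by
  rw [costConjugate, costConjugate, ereal_iSup_add_coe, ← hφ.iSup_comp]
  refine iSup_congr fun x => ?_
  induction k (φ x) with
  | top => simp
  | bot => simp
  | coe r =>
    norm_cast
    linarith [hc x y]

end CostConjugate

section AffineMinorant

/-- The epigraph of `p`, restricted to real heights so that it is a subset of a vector space when
`X` is one. -/
def realEpigraph {X : Type*} (p : X → EReal) : Set (X × ℝ) :=
  {q | p q.1 ≤ (q.2 : EReal)}

theorem isClosed_realEpigraph {X : Type*} [TopologicalSpace X] {p : X → EReal}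
    (hp : LowerSemicontinuous p) : IsClosed (realEpigraph p) :=
  hp.isClosed_epigraph.preimage (f := fun q : X × ℝ => (q.1, (q.2 : EReal)))
    (continuous_fst.prodMk (continuous_coe_real_ereal.comp continuous_snd))

variable {E : Type*} [AddCommGroup E] [Module ℝ E] [TopologicalSpace E] [IsTopologicalAddGroup E]
  [ContinuousSMul ℝ E] [LocallyConvexSpace ℝ E] {p : E → EReal} {x₀ : E} {t : ℝ}

theorem exists_halfspace_of_lt (hlsc : LowerSemicontinuous p) (hconv : Convex ℝ (realEpigraph p))
    (ht : (t : EReal) < p x₀) :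
    ∃ (ℓ : StrongDual ℝ E) (α u : ℝ), 0 ≤ α ∧ ℓ x₀ + t * α < u ∧
      ∀ x (s : ℝ), p x ≤ s → u < ℓ x + s * α := by
  by_cases! hempty : ∀ x (s : ℝ), (s : EReal) < p x
  · exact ⟨0, 0, 1, le_rfl, by simp, fun x s hs => absurd hs (hempty x s).not_ge⟩
  obtain ⟨x₁, s₁, h₁⟩ := hempty
  obtain ⟨φ, u, hφ, hu⟩ := geometric_hahn_banach_point_closed (x := (x₀, t)) hconv
    (isClosed_realEpigraph hlsc) ht.not_ge
  have hsplit (x : E) (s : ℝ) : φ (x, s) = φ (x, 0) + s * φ (0, 1) := by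
    rw [← smul_eq_mul, ← map_smul, ← map_add]
    simp
  have hepi (x : E) (s : ℝ) (hs : p x ≤ s) : u < φ (x, 0) + s * φ (0, 1) :=
    hsplit x s ▸ hu (x, s) hs
  refine ⟨φ.comp (.inl ℝ E ℝ), φ (0, 1), u, ?_, hsplit x₀ t ▸ hφ, hepi⟩
  by_contra! hneg
  -- the epigraph is unbounded above over `x₁`, so it would leave the half-space
  set s := max s₁ ((u - φ (x₁, 0)) / φ (0, 1))
  have hs : p x₁ ≤ s := h₁.trans (EReal.coe_le_coe_iff.2 (le_max_left ..))
  have hout : s * φ (0, 1) ≤ u - φ (x₁, 0) := (div_le_iff_of_neg hneg).1 (le_max_right ..)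
  linarith [hepi x₁ s hs]

/-- The separating hyperplane may be vertical; adding to it a small multiple of a given affine
minorant makes it a graph. -/
theorem exists_affine_minorant_of_lt (hlsc : LowerSemicontinuous p)
    (hconv : Convex ℝ (realEpigraph p))
    (hminorant : ∃ (ℓ : StrongDual ℝ E) (r : ℝ), ∀ x, ((ℓ x - r : ℝ) : EReal) ≤ p x)
    (ht : (t : EReal) < p x₀) :
    ∃ (ℓ : StrongDual ℝ E) (r : ℝ), (∀ x, ((ℓ x - r : ℝ) : EReal) ≤ p x) ∧ t < ℓ x₀ - r := by
  obtain ⟨ℓ₀, r₀, h₀⟩ := hminorant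
  obtain ⟨ℓ, α, u, hα, hlt, hepi⟩ := exists_halfspace_of_lt hlsc hconv ht
  obtain ⟨ε, hε, hεt⟩ := exists_pos_mul_lt (sub_pos.2 hlt) (t - (ℓ₀ x₀ - r₀))
  have hαε : 0 < α + ε := by positivity
  have hval (x : E) : ((α + ε)⁻¹ • (ε • ℓ₀ - ℓ)) x - (α + ε)⁻¹ * (ε * r₀ - u) =
      (u - ℓ x + ε * (ℓ₀ x - r₀)) / (α + ε) := by
    simp only [smul_apply, sub_apply, smul_eq_mul]
    ring
  refine ⟨(α + ε)⁻¹ • (ε • ℓ₀ - ℓ), (α + ε)⁻¹ * (ε * r₀ - u), fun x => ?_, ?_⟩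
  · rw [hval]
    refine EReal.le_of_forall_lt_iff_le.1 fun s hs => ?_
    have hs₀ : ℓ₀ x - r₀ ≤ s := EReal.coe_le_coe_iff.1 ((h₀ x).trans hs.le)
    rw [EReal.coe_le_coe_iff, div_le_iff₀ hαε]
    linarith [hepi x s hs.le, mul_le_mul_of_nonneg_left hs₀ hε.le]
  · rw [hval, lt_div_iff₀ hαε]
    linarith

end AffineMinorant

section Legendre

variable {V : Type*} [NormedAddCommGroup V] [InnerProductSpace ℝ V] {g h p : V → EReal}

theorem lowerSemicontinuous_inner_sub (z : V) (a : EReal) :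
    LowerSemicontinuous fun x : V => ((⟪z, x⟫_ℝ : ℝ) : EReal) - a := by
  induction a with
  | bot => simpa using lowerSemicontinuous_const
  | top => simpa using lowerSemicontinuous_const
  | coe r =>
    simp only [← EReal.coe_sub]
    exact (continuous_coe_real_ereal.comp (by fun_prop)).lowerSemicontinuous

theorem eConvexOn_inner_sub (z : V) (a : EReal) :
    EConvexOn fun x : V => ((⟪z, x⟫_ℝ : ℝ) : EReal) - a := by
  intro x y s t hs ht hst
  induction a with
  | top => simp
  | bot =>
    rcases hs.eq_or_lt with rfl | hs
    · obtain rfl : t = 1 := by linarith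
      simp
    · rcases ht.eq_or_lt with rfl | ht
      · obtain rfl : s = 1 := by linarith
        simp
      · simp [EReal.coe_mul_top_of_pos, hs, ht]
  | coe r =>
    beta_reduce
    norm_cast
    rw [inner_add_right, inner_smul_right, inner_smul_right]
    obtain rfl : t = 1 - s := by linarith
    apply le_of_eq
    ring

theorem EConvexOn.iSup {ι : Sort*} {h : ι → V → EReal} (hh : ∀ i, EConvexOn (h i)) :
    EConvexOn fun x => ⨆ i, h i x := by
  intro x y a b ha hb hab
  refine iSup_le fun i => (hh i x y a b ha hb hab).trans (add_le_add ?_ ?_)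
  · exact mul_le_mul_of_nonneg_left (le_iSup (h · x) i) (EReal.coe_nonneg.2 ha)
  · exact mul_le_mul_of_nonneg_left (le_iSup (h · y) i) (EReal.coe_nonneg.2 hb)

theorem EConvexOn.sup (hg : EConvexOn g) (hh : EConvexOn h) : EConvexOn (g ⊔ h) := by
  have hsup : g ⊔ h = fun x => ⨆ b : Bool, cond b g h x :=
    funext fun x => (iSup_bool_eq (f := fun b => cond b g h x)).symm
  rw [hsup]
  exact EConvexOn.iSup (Bool.rec hh hg)

theorem EConvexOn.convex_realEpigraph (hh : EConvexOn h) : Convex ℝ (realEpigraph h) := by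
  rintro ⟨x, s⟩ hx ⟨y, t⟩ hy a b ha hb hab
  calc h (a • x + b • y) ≤ (a : EReal) * h x + (b : EReal) * h y := hh x y a b ha hb hab
    _ ≤ (a : EReal) * s + (b : EReal) * t :=
      add_le_add (mul_le_mul_of_nonneg_left hx (EReal.coe_nonneg.2 ha))
        (mul_le_mul_of_nonneg_left hy (EReal.coe_nonneg.2 hb))
    _ = ((a • s + b • t : ℝ) : EReal) := by simp

theorem lowerSemicontinuous_legendre (g : V → EReal) : LowerSemicontinuous (legendre g) :=
  lowerSemicontinuous_iSup fun z => lowerSemicontinuous_inner_sub z (g z)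

theorem eConvexOn_legendre (g : V → EReal) : EConvexOn (legendre g) :=
  EConvexOn.iSup fun z => eConvexOn_inner_sub z (g z)

theorem legendre_eq_costConjugate : legendre (V := V) = costConjugate fun x y => ⟪x, y⟫_ℝ := rfl

theorem legendre_le_iff {z : V} {a : EReal} :
    legendre g z ≤ a ↔ ∀ x, ((⟪z, x⟫_ℝ : ℝ) : EReal) - a ≤ g x := by
  simp only [real_inner_comm _ z, legendre_eq_costConjugate, costConjugate_le_iff]

theorem legendre_antitone : Antitone (legendre (V := V)) :=
  costConjugate_antitone

theorem legendre_legendre_le (g : V → EReal) : legendre (legendre g) ≤ g :=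
  costConjugate_costConjugate_le fun x y => real_inner_comm x y

theorem legendre_legendre_eq_self [CompleteSpace V] (hlsc : LowerSemicontinuous p)
    (hconv : EConvexOn p) (hp : ∃ z, legendre p z ≠ ⊤) : legendre (legendre p) = p := by
  refine (legendre_legendre_le p).antisymm fun x => ?_
  obtain ⟨z₀, hz₀⟩ := hp
  obtain ⟨r₀, hr₀, -⟩ := EReal.lt_iff_exists_real_btwn.1 hz₀.lt_top
  refine EReal.ge_of_forall_gt_iff_ge.1 fun t ht => ?_
  obtain ⟨ℓ, r, hℓ, htℓ⟩ := exists_affine_minorant_of_lt hlsc hconv.convex_realEpigraph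
    ⟨InnerProductSpace.toDual ℝ V z₀, r₀, legendre_le_iff.1 hr₀.le⟩ ht
  obtain ⟨z, rfl⟩ := (InnerProductSpace.toDual ℝ V).surjective ℓ
  calc (t : EReal) ≤ ((⟪z, x⟫_ℝ - r : ℝ) : EReal) := EReal.coe_le_coe_iff.2 htℓ.le
    _ = ((⟪z, x⟫_ℝ : ℝ) : EReal) - r := EReal.coe_sub _ _
    _ ≤ ((⟪z, x⟫_ℝ : ℝ) : EReal) - legendre p z :=
      EReal.sub_le_sub le_rfl (legendre_le_iff.2 hℓ)
    _ ≤ legendre (legendre p) x :=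
      le_iSup (fun z : V => ((⟪z, x⟫_ℝ : ℝ) : EReal) - legendre p z) z

theorem isLscConvexEnvelope_legendre_legendre [CompleteSpace V] (hg : ∃ z, legendre g z ≠ ⊤) :
    IsLscConvexEnvelope g (legendre (legendre g)) := by
  refine ⟨lowerSemicontinuous_legendre _, eConvexOn_legendre _, legendre_legendre_le g,
    fun h hlsc hconv hle => ?_⟩
  obtain ⟨z, hz⟩ := hg
  -- `h` may take the value `-∞`; its maximum with an affine minorant of `g` does not
  set a : V → EReal := fun x => ((⟪z, x⟫_ℝ : ℝ) : EReal) - legendre g z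
  have hag : a ≤ g := legendre_le_iff.1 le_rfl
  have hproper : legendre (h ⊔ a) z ≠ ⊤ :=
    ne_top_of_le_ne_top hz (legendre_le_iff.2 fun _ => le_sup_right)
  calc h ≤ h ⊔ a := le_sup_left
    _ = legendre (legendre (h ⊔ a)) :=
      (legendre_legendre_eq_self (hlsc.sup (lowerSemicontinuous_inner_sub z _))
        (hconv.sup (eConvexOn_inner_sub z _)) ⟨z, hproper⟩).symm
    _ ≤ legendre (legendre g) := legendre_antitone (legendre_antitone (sup_le hle hag))

end Legendre

section STransform

variable {V : Type*} [NormedAddCommGroup V] [InnerProductSpace ℝ V] {γ : ℝ}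

theorem SgammaE_eq_costConjugate (γ : ℝ) (k : V → EReal) :
    SgammaE γ k = costConjugate (fun x y => -(γ / 2 * ‖x - y‖ ^ 2)) k := by
  ext y
  simp only [SgammaE, costConjugate, EReal.coe_neg, sub_eq_add_neg, add_comm]

theorem inner_sub_half_mul_norm_sub_sq (hγ : γ ≠ 0) (d x y : V) :
    ⟪x, y⟫_ℝ - γ / 2 * ‖x - d‖ ^ 2 =
      -(γ / 2 * ‖x - (γ⁻¹ • y + d)‖ ^ 2) +
        (γ / 2 * ‖γ⁻¹ • y + d‖ ^ 2 - γ / 2 * ‖d‖ ^ 2) := by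
  rw [norm_sub_sq_real x d, norm_sub_sq_real x (γ⁻¹ • y + d), inner_add_right, inner_smul_right]
  field

theorem legendre_add_sq (hγ : γ ≠ 0) (d : V) (k : V → EReal) (y : V) :
    legendre (fun x => k x + ((γ / 2 * ‖x - d‖ ^ 2 : ℝ) : EReal)) y =
      SgammaE γ k (γ⁻¹ • y + d) + ((γ / 2 * ‖γ⁻¹ • y + d‖ ^ 2 : ℝ) : EReal)
        - ((γ / 2 * ‖d‖ ^ 2 : ℝ) : EReal) := by
  rw [SgammaE_eq_costConjugate, legendre_eq_costConjugate, add_sub_assoc, ← EReal.coe_sub]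
  exact costConjugate_comp_add (φ := id) (ψ := fun y => γ⁻¹ • y + d)
    (a := fun x => γ / 2 * ‖x - d‖ ^ 2)
    (b := fun y => γ / 2 * ‖γ⁻¹ • y + d‖ ^ 2 - γ / 2 * ‖d‖ ^ 2) Function.surjective_id
    (fun x y => inner_sub_half_mul_norm_sub_sq hγ d x y) k y

theorem legendre_comp_add_sq (hγ : γ ≠ 0) (d : V) (k : V → EReal) (x : V) :
    legendre (fun y => k (γ⁻¹ • y + d) + ((γ / 2 * ‖γ⁻¹ • y + d‖ ^ 2 : ℝ) : EReal)
        - ((γ / 2 * ‖d‖ ^ 2 : ℝ) : EReal)) x =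
      SgammaE γ k x + ((γ / 2 * ‖x - d‖ ^ 2 : ℝ) : EReal) := by
  have hsurj : Function.Surjective fun y : V => γ⁻¹ • y + d := fun w =>
    ⟨γ • (w - d), by simp [smul_smul, hγ]⟩
  simp only [SgammaE_eq_costConjugate, legendre_eq_costConjugate, add_sub_assoc, ← EReal.coe_sub]
  refine costConjugate_comp_add (ψ := id) (b := fun x => γ / 2 * ‖x - d‖ ^ 2)
    (a := fun y => γ / 2 * ‖γ⁻¹ • y + d‖ ^ 2 - γ / 2 * ‖d‖ ^ 2) hsurj (fun y x => ?_) k x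
  rw [real_inner_comm, id, norm_sub_rev (γ⁻¹ • y + d)]
  linarith [inner_sub_half_mul_norm_sub_sq hγ d x y]

theorem legendre_legendre_add_sq (hγ : γ ≠ 0) (d : V) (k : V → EReal) :
    legendre (legendre fun x => k x + ((γ / 2 * ‖x - d‖ ^ 2 : ℝ) : EReal)) =
      fun x => SgammaE γ (SgammaE γ k) x + ((γ / 2 * ‖x - d‖ ^ 2 : ℝ) : EReal) := by
  rw [funext (legendre_add_sq hγ d k)]
  exact funext (legendre_comp_add_sq hγ d (SgammaE γ k))

theorem exists_legendre_add_sq_ne_top (hγ : γ ≠ 0) (d : V) {k : V → EReal}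
    (hk : ∃ y, SgammaE γ k y ≠ ⊤) :
    ∃ z, legendre (fun x => k x + ((γ / 2 * ‖x - d‖ ^ 2 : ℝ) : EReal)) z ≠ ⊤ := by
  obtain ⟨y, hy⟩ := hk
  refine ⟨γ • (y - d), ?_⟩
  rw [legendre_add_sq hγ, add_sub_assoc, ← EReal.coe_sub, inv_smul_smul₀ hγ, sub_add_cancel]
  exact EReal.add_ne_top hy (EReal.coe_ne_top _)

theorem SgammaE_SgammaE_le (γ : ℝ) (k : V → EReal) : SgammaE γ (SgammaE γ k) ≤ k := by
  rw [SgammaE_eq_costConjugate, SgammaE_eq_costConjugate]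
  exact costConjugate_costConjugate_le fun x y => by rw [norm_sub_rev]

theorem SgammaE_le_neg_iInf (hγ : 0 ≤ γ) (k : V → EReal) (y : V) :
    SgammaE γ k y ≤ -⨅ x, k x := by
  refine iSup_le fun x => ?_
  have hsq : (0 : EReal) ≤ ((γ / 2 * ‖x - y‖ ^ 2 : ℝ) : EReal) :=
    EReal.coe_nonneg.2 (by positivity)
  simpa only [sub_zero] using EReal.sub_le_sub (EReal.neg_le_neg_iff.2 (iInf_le k x)) hsq

theorem neg_le_SgammaE (γ : ℝ) (k : V → EReal) (y : V) : -k y ≤ SgammaE γ k y :=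
  le_iSup_of_le y (by simp)

theorem iInf_le_SgammaE_SgammaE (hγ : 0 ≤ γ) (k : V → EReal) (x : V) :
    (⨅ z, k z) ≤ SgammaE γ (SgammaE γ k) x :=
  (EReal.le_neg_of_le_neg (SgammaE_le_neg_iInf hγ k x)).trans (neg_le_SgammaE γ _ x)

end STransform

theorem statement0_general {V : Type*} [NormedAddCommGroup V] [InnerProductSpace ℝ V]
    [CompleteSpace V] {γ : ℝ} (hγ : 0 < γ) (d : V) {k : V → EReal}
    (hk : ∃ y, SgammaE γ k y ≠ ⊤) :
    (∀ y : V,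
      legendre (fun x => k x + ((γ / 2 * ‖x - d‖ ^ 2 : ℝ) : EReal)) y =
        SgammaE γ k (γ⁻¹ • y + d) + ((γ / 2 * ‖γ⁻¹ • y + d‖ ^ 2 : ℝ) : EReal)
          - ((γ / 2 * ‖d‖ ^ 2 : ℝ) : EReal)) ∧
    (∀ x : V,
      legendre (fun y => SgammaE γ k (γ⁻¹ • y + d) + ((γ / 2 * ‖γ⁻¹ • y + d‖ ^ 2 : ℝ) : EReal)
          - ((γ / 2 * ‖d‖ ^ 2 : ℝ) : EReal)) x =
        SgammaE γ (SgammaE γ k) x + ((γ / 2 * ‖x - d‖ ^ 2 : ℝ) : EReal)) ∧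
    IsLscConvexEnvelope (fun x => k x + ((γ / 2 * ‖x - d‖ ^ 2 : ℝ) : EReal))
      (fun x => SgammaE γ (SgammaE γ k) x + ((γ / 2 * ‖x - d‖ ^ 2 : ℝ) : EReal)) ∧
    (∀ x : V, (⨅ z, k z) ≤ SgammaE γ (SgammaE γ k) x ∧ SgammaE γ (SgammaE γ k) x ≤ k x) := by
  refine ⟨legendre_add_sq hγ.ne' d k, legendre_comp_add_sq hγ.ne' d (SgammaE γ k), ?_,
    fun x => ⟨iInf_le_SgammaE_SgammaE hγ.le k x, SgammaE_SgammaE_le γ k x⟩⟩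
  rw [← legendre_legendre_add_sq hγ.ne' d k]
  exact isLscConvexEnvelope_legendre_legendre (exists_legendre_add_sq_ne_top hγ.ne' d hk)

/-- The Legendre transform of `x ↦ f(x) + (γ/2)‖x-d‖²` is
`y ↦ S_γ(f)(y/γ + d) + (γ/2)‖y/γ + d‖² - (γ/2)‖d‖²`, the Legendre transform of the latter is
`x ↦ S_γ²(f)(x) + (γ/2)‖x-d‖²`; consequently `x ↦ S_γ²(f)(x) + (γ/2)‖x-d‖²` is the l.s.c. convex
envelope of `x ↦ f(x) + (γ/2)‖x-d‖²`, and `0 ≤ S_γ²(f) ≤ f`. -/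
theorem statement0 {V : Type*} [NormedAddCommGroup V] [InnerProductSpace ℝ V]
    [CompleteSpace V] [TopologicalSpace.SeparableSpace V]
    (γ : ℝ) (hγ : 0 < γ) (d : V) (f : V → ℝ≥0∞) :
    (∀ y : V,
      legendre (fun x => (f x : EReal) + ((γ / 2 * ‖x - d‖ ^ 2 : ℝ) : EReal)) y =
        Sgamma γ f (γ⁻¹ • y + d) + ((γ / 2 * ‖γ⁻¹ • y + d‖ ^ 2 : ℝ) : EReal)
          - ((γ / 2 * ‖d‖ ^ 2 : ℝ) : EReal)) ∧
    (∀ x : V,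
      legendre (fun y => Sgamma γ f (γ⁻¹ • y + d) + ((γ / 2 * ‖γ⁻¹ • y + d‖ ^ 2 : ℝ) : EReal)
          - ((γ / 2 * ‖d‖ ^ 2 : ℝ) : EReal)) x =
        Sgamma2 γ f x + ((γ / 2 * ‖x - d‖ ^ 2 : ℝ) : EReal)) ∧
    IsLscConvexEnvelope (fun x => (f x : EReal) + ((γ / 2 * ‖x - d‖ ^ 2 : ℝ) : EReal))
      (fun x => Sgamma2 γ f x + ((γ / 2 * ‖x - d‖ ^ 2 : ℝ) : EReal)) ∧
    (∀ x : V, 0 ≤ Sgamma2 γ f x ∧ Sgamma2 γ f x ≤ (f x : EReal)) := by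
  have hf : 0 ≤ ⨅ x, (f x : EReal) := le_iInf fun x => EReal.coe_ennreal_nonneg (f x)
  have hproper : Sgamma γ f d ≠ ⊤ := ne_top_of_le_ne_top EReal.zero_ne_top
    ((SgammaE_le_neg_iInf hγ.le _ d).trans (EReal.neg_le_zero.2 hf))
  obtain ⟨hconj, hbiconj, henvelope, hbounds⟩ := statement0_general hγ d ⟨d, hproper⟩
  exact ⟨hconj, hbiconj, henvelope, fun x => ⟨hf.trans (hbounds x).1, (hbounds x).2⟩⟩
end
end

section
/- Let f : V → [0,∞] be a lower semicontinuous function on a separable real Hilbert space V which is not identically +∞, and let γ > 0. Then S_γ(f) takes values in (−∞,0] and is continuous on V, whereas S_γ²(f) takes values in [0,∞], is lower semicontinuous, and is continuous on the interior of dom(S_γ²(f)) = {x : S_γ²(f)(x) < ∞}. -/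
/-!
Expanding the square, `S_γ(h)(y) + (γ/2)‖y‖²` is the supremum over `x` of the affine functions
`y ↦ -h(x) - (γ/2)‖x‖² + γ⟪x, y⟫`, so it is convex and lower semicontinuous for every `h`. By
Baire's theorem a finite lower semicontinuous function on an open set is bounded above near some
point, and a convex function with this property is continuous; hence every S-transform is
continuous on the interior of its domain. For `f ≥ 0` we have `S_γ(f) ≤ 0`, so the domain of
`S_γ(f)` is the whole space, and `S_γ²(f) ≥ -S_γ(f) ≥ 0`.
-/

open scoped InnerProductSpace RealInnerProductSpace ENNReal Topology
open Filter

noncomputable section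

section Convex

theorem exists_isBoundedUnder_nhds_of_lowerSemicontinuousOn {X : Type*} [TopologicalSpace X]
    [BaireSpace X] {C : Set X} {g : X → ℝ} (hC : IsOpen C) (hne : C.Nonempty)
    (hg : LowerSemicontinuousOn g C) : ∃ x ∈ C, (𝓝 x).IsBoundedUnder (· ≤ ·) g := by
  have hclosed (n : ℕ) : IsClosed (C ∩ g ⁻¹' Set.Ioi (n : ℝ))ᶜ := by
    obtain ⟨U, hU, hCU⟩ := lowerSemicontinuousOn_iff_preimage_Ioi.1 hg n
    exact (hCU ▸ hC.inter hU).isClosed_compl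
  have hcover : ⋃ n : ℕ, (C ∩ g ⁻¹' Set.Ioi (n : ℝ))ᶜ = Set.univ := by
    refine Set.eq_univ_of_forall fun x => Set.mem_iUnion.2 ?_
    obtain ⟨n, hn⟩ := exists_nat_ge (g x)
    exact ⟨n, fun hx => hx.2.not_ge hn⟩
  obtain ⟨x, hxC, hx⟩ :=
    (dense_iUnion_interior_of_closed hclosed hcover).inter_open_nonempty C hC hne
  obtain ⟨n, hn⟩ := Set.mem_iUnion.1 hx
  refine ⟨x, hxC, n, eventually_map.2 ?_⟩
  filter_upwards [mem_interior_iff_mem_nhds.1 hn, hC.mem_nhds hxC] with z hz hzC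
  exact not_lt.1 fun hlt => hz ⟨hzC, hlt⟩

theorem continuousOn_of_convexOn_of_lowerSemicontinuousOn {E : Type*} [NormedAddCommGroup E]
    [NormedSpace ℝ E] [BaireSpace E] {C : Set E} {g : E → ℝ} (hC : IsOpen C)
    (hconv : ConvexOn ℝ C g) (hlsc : LowerSemicontinuousOn g C) : ContinuousOn g C := by
  rcases C.eq_empty_or_nonempty with rfl | hne
  · exact continuousOn_empty g
  · exact ((hconv.continuousOn_tfae hC hne).out 3 1).mp
      (exists_isBoundedUnder_nhds_of_lowerSemicontinuousOn hC hne hlsc)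

end Convex

section EReal

theorem ereal_iSup_sub_coe {ι : Type*} (u : ι → EReal) (r : ℝ) :
    ⨆ i, (u i - r) = (⨆ i, u i) - r := by
  refine le_antisymm (iSup_le fun i => EReal.sub_le_sub (le_iSup u i) le_rfl) ?_
  refine EReal.sub_le_of_le_add (iSup_le fun i => ?_)
  rw [← EReal.sub_le_iff_le_add (.inl (EReal.coe_ne_bot r)) (.inl (EReal.coe_ne_top r))]
  exact le_iSup (fun i => u i - r) i

theorem continuous_ereal_add_coe : Continuous fun p : EReal × ℝ => p.1 + (p.2 : EReal) := by
  refine continuous_iff_continuousAt.2 fun p => ?_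
  have hadd : ContinuousAt (fun q : EReal × EReal => q.1 + q.2) (p.1, p.2) :=
    EReal.continuousAt_add (.inr (EReal.coe_ne_bot p.2)) (.inr (EReal.coe_ne_top p.2))
  exact hadd.comp (f := Prod.map id Real.toEReal)
    (continuous_id.prodMap continuous_coe_real_ereal).continuousAt

theorem lowerSemicontinuousOn_ereal_toReal {X : Type*} [TopologicalSpace X] {g : X → EReal}
    {s : Set X} (hg : LowerSemicontinuousOn g s) (hbot : ∀ x ∈ s, g x ≠ ⊥)
    (htop : ∀ x ∈ s, g x ≠ ⊤) :
    LowerSemicontinuousOn (fun x => (g x).toReal) s := by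
  have hlt {x : X} (hx : x ∈ s) (m : ℝ) : m < (g x).toReal ↔ (m : EReal) < g x := by
    rw [← EReal.coe_lt_coe_iff, EReal.coe_toReal (htop x hx) (hbot x hx)]
  intro x hx m hm
  filter_upwards [hg x hx m ((hlt hx m).1 hm), self_mem_nhdsWithin] with z hz hzs
  exact (hlt hzs m).2 hz

theorem continuousOn_of_convexOn_ereal_toReal {E : Type*} [NormedAddCommGroup E] [NormedSpace ℝ E]
    [BaireSpace E] {C : Set E} {g : E → EReal} (hC : IsOpen C)
    (hconv : ConvexOn ℝ C fun y => (g y).toReal) (hlsc : LowerSemicontinuousOn g C)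
    (hbot : ∀ y ∈ C, g y ≠ ⊥) (htop : ∀ y ∈ C, g y ≠ ⊤) : ContinuousOn g C :=
  have hreal : ContinuousOn (fun y => (g y).toReal) C :=
    continuousOn_of_convexOn_of_lowerSemicontinuousOn hC hconv
      (lowerSemicontinuousOn_ereal_toReal hlsc hbot htop)
  (continuous_coe_real_ereal.comp_continuousOn hreal).congr fun y hy =>
    (EReal.coe_toReal (htop y hy) (hbot y hy)).symm

end EReal

section Supremum

variable {ι : Type*}

theorem lowerSemicontinuous_iSup_add_coe {X : Type*} [TopologicalSpace X] (c : ι → EReal)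
    {φ : ι → X → ℝ} (hφ : ∀ i, Continuous (φ i)) :
    LowerSemicontinuous fun y => ⨆ i, (c i + φ i y) :=
  lowerSemicontinuous_iSup fun i =>
    (continuous_ereal_add_coe.comp (continuous_const.prodMk (hφ i))).lowerSemicontinuous

theorem convexOn_toReal_iSup_add_coe {E : Type*} [AddCommGroup E] [Module ℝ E] {C : Set E}
    (hC : Convex ℝ C) (c : ι → EReal) {φ : ι → E → ℝ} (hφ : ∀ i, ConvexOn ℝ C (φ i))
    (hbot : ∀ y ∈ C, (⨆ i, (c i + φ i y)) ≠ ⊥) (htop : ∀ y ∈ C, (⨆ i, (c i + φ i y)) ≠ ⊤) :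
    ConvexOn ℝ C fun y => (⨆ i, (c i + φ i y)).toReal := by
  have hcoe {y : E} (hy : y ∈ C) := EReal.coe_toReal (htop y hy) (hbot y hy)
  refine ⟨hC, fun y hy z hz a b ha hb hab => ?_⟩
  rw [← EReal.coe_le_coe_iff, hcoe (hC hy hz ha hb hab)]
  refine iSup_le fun i => ?_
  have hle {y : E} (hy : y ∈ C) : c i + φ i y ≤ ((⨆ j, (c j + φ j y)).toReal : EReal) :=
    (hcoe hy).symm ▸ le_iSup (fun j => c j + (φ j y : EReal)) i
  have hy' := hle hy
  have hz' := hle hz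
  cases hc : c i with
  | bot => simp only [EReal.bot_add, bot_le]
  | top =>
    rw [hc, EReal.top_add_coe, top_le_iff] at hy'
    exact absurd hy' (EReal.coe_ne_top _)
  | coe r =>
    rw [hc, ← EReal.coe_add, EReal.coe_le_coe_iff] at hy' hz'
    rw [← EReal.coe_add, EReal.coe_le_coe_iff]
    calc r + φ i (a • y + b • z)
        ≤ r + (a * φ i y + b * φ i z) := by gcongr; exact (hφ i).2 hy hz ha hb hab
      _ = a * (r + φ i y) + b * (r + φ i z) := by linear_combination (-r) * hab
      _ ≤ _ := by simp only [smul_eq_mul]; gcongr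

theorem continuousOn_iSup_add_coe {E : Type*} [NormedAddCommGroup E] [NormedSpace ℝ E]
    [BaireSpace E] (c : ι → EReal) {φ : ι → E → ℝ} (hconv : ∀ i, ConvexOn ℝ Set.univ (φ i))
    (hcont : ∀ i, Continuous (φ i)) :
    ContinuousOn (fun y => ⨆ i, (c i + φ i y)) (interior {y | (⨆ i, (c i + φ i y)) ≠ ⊤}) := by
  by_cases hc : ∀ i, c i = ⊥
  · simpa only [hc, EReal.bot_add] using continuousOn_const
  obtain ⟨i, hi⟩ := not_forall.1 hc
  have hbot (y : E) : (⨆ i, (c i + φ i y)) ≠ ⊥ :=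
    ne_bot_of_le_ne_bot (EReal.add_ne_bot_iff.2 ⟨hi, EReal.coe_ne_bot (φ i y)⟩)
      (le_iSup (fun j => c j + (φ j y : EReal)) i)
  intro y hy
  obtain ⟨r, hr, hball⟩ := Metric.isOpen_iff.1 isOpen_interior y hy
  have htop : ∀ z ∈ Metric.ball y r, (⨆ i, (c i + φ i z)) ≠ ⊤ :=
    fun z hz => interior_subset (hball hz)
  have hconvex : ConvexOn ℝ (Metric.ball y r) fun z => (⨆ i, (c i + φ i z)).toReal :=
    convexOn_toReal_iSup_add_coe (convex_ball y r) c
      (fun i => (hconv i).subset (Set.subset_univ _) (convex_ball y r)) (fun z _ => hbot z) htop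
  have hlsc : LowerSemicontinuousOn (fun z => ⨆ i, (c i + φ i z)) (Metric.ball y r) :=
    (lowerSemicontinuous_iSup_add_coe c hcont).lowerSemicontinuousOn _
  exact ((continuousOn_of_convexOn_ereal_toReal Metric.isOpen_ball hconvex hlsc (fun z _ => hbot z)
    htop).continuousAt (Metric.ball_mem_nhds y hr)).continuousWithinAt

end Supremum

section STransform

variable {V : Type*} [NormedAddCommGroup V] [InnerProductSpace ℝ V]

theorem le_sgammaE (γ : ℝ) (h : V → EReal) (x y : V) :
    -(h x) - ((γ / 2 * ‖x - y‖ ^ 2 : ℝ) : EReal) ≤ SgammaE γ h y :=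
  le_iSup (fun x : V => -(h x) - ((γ / 2 * ‖x - y‖ ^ 2 : ℝ) : EReal)) x

theorem neg_le_sgammaE (γ : ℝ) (h : V → EReal) (x : V) : -(h x) ≤ SgammaE γ h x := by
  simpa using le_sgammaE γ h x x

theorem sgammaE_nonpos {γ : ℝ} (hγ : 0 ≤ γ) {h : V → EReal} (hh : ∀ x, 0 ≤ h x) (y : V) :
    SgammaE γ h y ≤ 0 := by
  refine iSup_le fun x => ?_
  have hq : (0 : EReal) ≤ ((γ / 2 * ‖x - y‖ ^ 2 : ℝ) : EReal) :=
    EReal.coe_nonneg.2 (by positivity)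
  simpa using EReal.sub_le_sub (EReal.neg_le_zero.2 (hh x)) hq

theorem bot_lt_sgammaE (γ : ℝ) {h : V → EReal} {x : V} (hx : h x ≠ ⊤) (y : V) :
    ⊥ < SgammaE γ h y := by
  refine lt_of_lt_of_le ?_ (le_sgammaE γ h x y)
  rw [bot_lt_iff_ne_bot, sub_eq_add_neg, ← EReal.coe_neg]
  exact EReal.add_ne_bot_iff.2 ⟨EReal.neg_eq_bot_iff.not.2 hx, EReal.coe_ne_bot _⟩

theorem sgammaE_eq_iSup_add_inner_sub (γ : ℝ) (h : V → EReal) (y : V) :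
    SgammaE γ h y =
      (⨆ x, (-(h x) - ((γ / 2 * ‖x‖ ^ 2 : ℝ) : EReal) + ((γ * ⟪x, y⟫_ℝ : ℝ) : EReal))) -
        ((γ / 2 * ‖y‖ ^ 2 : ℝ) : EReal) := by
  rw [← ereal_iSup_sub_coe]
  refine iSup_congr fun x => ?_
  have hsq : γ / 2 * ‖x - y‖ ^ 2 =
      γ / 2 * ‖x‖ ^ 2 - γ * ⟪x, y⟫_ℝ + γ / 2 * ‖y‖ ^ 2 := by
    rw [norm_sub_sq_real]
    ring
  cases -(h x) with
  | bot => simp only [EReal.bot_sub, EReal.bot_add]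
  | top => simp only [EReal.top_sub_coe, EReal.top_add_coe]
  | coe c =>
    norm_cast
    linear_combination -hsq

theorem lowerSemicontinuous_sgammaE (γ : ℝ) (h : V → EReal) :
    LowerSemicontinuous (SgammaE γ h) :=
  lowerSemicontinuous_iSup_add_coe (fun x => -(h x))
    (φ := fun x y => -(γ / 2 * ‖x - y‖ ^ 2)) fun x => by fun_prop

theorem continuousOn_sgammaE [BaireSpace V] (γ : ℝ) (h : V → EReal) :
    ContinuousOn (SgammaE γ h) (interior {y | SgammaE γ h y ≠ ⊤}) := by
  set g : V → EReal := fun y =>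
    ⨆ x, (-(h x) - ((γ / 2 * ‖x‖ ^ 2 : ℝ) : EReal) + ((γ * ⟪x, y⟫_ℝ : ℝ) : EReal))
  have hg : ContinuousOn g (interior {y | g y ≠ ⊤}) :=
    continuousOn_iSup_add_coe _
      (fun x => show ConvexOn ℝ Set.univ fun y => γ * ⟪x, y⟫_ℝ from
        (γ • innerₗ V x).convexOn convex_univ)
      fun x => by fun_prop
  have heq : SgammaE γ h = fun y => g y + ((-(γ / 2 * ‖y‖ ^ 2) : ℝ) : EReal) :=
    funext (sgammaE_eq_iSup_add_inner_sub γ h)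
  have hdom : {y | SgammaE γ h y ≠ ⊤} = {y | g y ≠ ⊤} := by
    ext y
    rw [heq]
    exact EReal.add_ne_top_iff_of_ne_bot_of_ne_top (EReal.coe_ne_bot _) (EReal.coe_ne_top _)
  rw [hdom, heq]
  exact continuous_ereal_add_coe.comp_continuousOn (hg.prodMk (by fun_prop))

theorem continuous_sgammaE [BaireSpace V] {γ : ℝ} {h : V → EReal}
    (hfin : ∀ y, SgammaE γ h y ≠ ⊤) :
    Continuous (SgammaE γ h) := by
  have hdom : {y | SgammaE γ h y ≠ ⊤} = Set.univ := Set.eq_univ_of_forall hfin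
  simpa only [hdom, interior_univ, continuousOn_univ] using continuousOn_sgammaE γ h

end STransform

theorem statement1_general {V : Type*} [NormedAddCommGroup V] [InnerProductSpace ℝ V]
    [BaireSpace V] {γ : ℝ} (hγ : 0 ≤ γ) {f : V → ℝ≥0∞} (hproper : ∃ x, f x ≠ ∞) :
    (∀ y : V, ⊥ < Sgamma γ f y ∧ Sgamma γ f y ≤ 0) ∧
    Continuous (Sgamma γ f) ∧
    (∀ x : V, 0 ≤ Sgamma2 γ f x) ∧
    LowerSemicontinuous (Sgamma2 γ f) ∧
    ContinuousOn (Sgamma2 γ f) (interior {x : V | Sgamma2 γ f x ≠ ⊤}) := by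
  obtain ⟨x, hx⟩ := hproper
  have hbot : ∀ y, ⊥ < Sgamma γ f y := bot_lt_sgammaE γ (EReal.coe_ennreal_eq_top_iff.not.2 hx)
  have hneg : ∀ y, Sgamma γ f y ≤ 0 := sgammaE_nonpos hγ fun x => EReal.coe_ennreal_nonneg (f x)
  have hcont : Continuous (Sgamma γ f) :=
    continuous_sgammaE fun y => ((hneg y).trans_lt EReal.zero_lt_top).ne
  have hpos (y : V) : 0 ≤ Sgamma2 γ f y :=
    (EReal.neg_nonneg.2 (hneg y)).trans (neg_le_sgammaE γ (Sgamma γ f) y)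
  exact ⟨fun y => ⟨hbot y, hneg y⟩, hcont, hpos, lowerSemicontinuous_sgammaE γ _,
    continuousOn_sgammaE γ _⟩

/-- For `f : V → [0,∞]` l.s.c. and not identically `+∞` and `γ > 0`:
`S_γ(f)` takes values in `(-∞,0]` and is continuous, while `S_γ²(f)` takes values in `[0,∞]`,
is lower semicontinuous, and is continuous on the interior of its domain. -/
theorem statement1 {V : Type*} [NormedAddCommGroup V] [InnerProductSpace ℝ V]
    [CompleteSpace V] [TopologicalSpace.SeparableSpace V]
    (γ : ℝ) (hγ : 0 < γ) (f : V → ℝ≥0∞)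
    (hlsc : LowerSemicontinuous f) (hproper : ∃ x, f x ≠ ∞) :
    (∀ y : V, ⊥ < Sgamma γ f y ∧ Sgamma γ f y ≤ 0) ∧
    Continuous (Sgamma γ f) ∧
    (∀ x : V, 0 ≤ Sgamma2 γ f x) ∧
    LowerSemicontinuous (Sgamma2 γ f) ∧
    ContinuousOn (Sgamma2 γ f) (interior {x : V | Sgamma2 γ f x ≠ ⊤}) :=
  statement1_general hγ.le hproper
end
end

section
/- Let f : V → [0,∞] be a lower semicontinuous function on a separable real Hilbert space V. Then: (i) for each fixed x ∈ V, the map γ ↦ S_γ²(f)(x) is non-decreasing on (0,∞); (ii) for every x ∈ V, lim_{γ→∞} S_γ²(f)(x) = f(x); (iii) the pointwise limit g(x) := lim_{γ→0⁺} S_γ²(f)(x) exists, g is convex, and CE(f) ≤ g ≤ f pointwise, where CE(f) denotes the lower semicontinuous convex envelope of f. -/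
open scoped InnerProductSpace RealInnerProductSpace ENNReal Topology
open Filter

noncomputable section

/-!
The value of `S_γ²(F)` at `x` is the supremum of the values at `x` of the concave quadratics with
Hessian `-γ` lying below `F`. Increasing `γ` lowers such a quadratic away from `x`, whence (i); by
semicontinuity, for large `γ` the quadratic may have its vertex at `x` and any height below `F x`,
whence (ii). Rewriting a single minorant around two points shows that
`S_γ²(F) + γ / 2 * ‖·‖ ^ 2` is convex, and the correction disappears as `γ → 0⁺`. Finally, a lower
semicontinuous convex function below `F` and bounded below is the supremum of its continuous affine
minorants (Hahn–Banach), which become quadratic minorants of `F` after subtracting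
`γ / 2 * ‖z - x‖ ^ 2`.
-/

open UniformSpace in
theorem denseRange_toDualMap (𝕜 V : Type*) [RCLike 𝕜] [NormedAddCommGroup V]
    [InnerProductSpace 𝕜 V] : DenseRange (InnerProductSpace.toDualMap 𝕜 V) := by
  let ι : V →L[𝕜] Completion V := Completion.toComplL
  let riesz := InnerProductSpace.toDual 𝕜 (Completion V)
  have hsurj : Function.Surjective fun w : Completion V => (riesz w).comp ι := fun ℓ => by
    obtain ⟨w, hw⟩ := riesz.surjective (ℓ.extend ι)
    refine ⟨w, ContinuousLinearMap.ext fun z => ?_⟩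
    rw [ContinuousLinearMap.comp_apply, hw]
    exact ContinuousLinearMap.extend_eq ℓ Completion.denseRange_coe
      (Completion.isUniformInducing_coe V) z
  have hcont : Continuous fun w : Completion V => (riesz w).comp ι :=
    riesz.continuous.clm_comp continuous_const
  convert hsurj.denseRange.comp Completion.denseRange_coe hcont using 1
  ext v z
  simp [riesz, ι]

section ConvexMinorants

variable {V : Type*} [NormedAddCommGroup V] [InnerProductSpace ℝ V] {h : V → EReal}

theorem EConvexOn.max_const (hconv : EConvexOn h) (c : EReal) :
    EConvexOn fun x => max (h x) c := by
  intro x y a b ha hb hab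
  have ha' : (0 : EReal) ≤ a := EReal.coe_nonneg.2 ha
  have hb' : (0 : EReal) ≤ b := EReal.coe_nonneg.2 hb
  refine max_le ((hconv x y a b ha hb hab).trans ?_) ?_
  · gcongr <;> exact le_max_left _ _
  · calc c = (a : EReal) * c + (b : EReal) * c := by
          rw [← EReal.right_distrib_of_nonneg ha' hb', ← EReal.coe_add, hab, EReal.coe_one, one_mul]
      _ ≤ (a : EReal) * max (h x) c + (b : EReal) * max (h y) c := by
          gcongr <;> exact le_max_right _ _

theorem EConvexOn.convex_epigraph (hconv : EConvexOn h) :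
    Convex ℝ {p : V × ℝ | h p.1 ≤ (p.2 : EReal)} := by
  intro p hp q hq a b ha hb hab
  have ha' : (0 : EReal) ≤ a := EReal.coe_nonneg.2 ha
  have hb' : (0 : EReal) ≤ b := EReal.coe_nonneg.2 hb
  calc h (a • p.1 + b • q.1) ≤ (a : EReal) * h p.1 + (b : EReal) * h q.1 :=
        hconv p.1 q.1 a b ha hb hab
    _ ≤ (a : EReal) * (p.2 : EReal) + (b : EReal) * (q.2 : EReal) :=
        add_le_add (mul_le_mul_of_nonneg_left hp ha') (mul_le_mul_of_nonneg_left hq hb')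
    _ = ((a • p + b • q).2 : EReal) := by simp

theorem EConvexOn.exists_separating_epigraph (hlsc : LowerSemicontinuous h)
    (hconv : EConvexOn h) (hdom : ∃ (y : V) (r : ℝ), h y ≤ r) {x : V} {t : ℝ}
    (ht : (t : EReal) < h x) :
    ∃ (ℓ : StrongDual ℝ V) (s u : ℝ), s ≤ 0 ∧ u < ℓ x + t * s ∧
      ∀ (z : V) (r : ℝ), h z ≤ r → ℓ z + r * s < u := by
  have hclosed : IsClosed {p : V × ℝ | h p.1 ≤ (p.2 : EReal)} := hlsc.isClosed_epigraph.preimage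
    (continuous_fst.prodMk (continuous_coe_real_ereal.comp continuous_snd))
  obtain ⟨φ, u, hφ, hu⟩ := geometric_hahn_banach_closed_point hconv.convex_epigraph hclosed
    (show (x, t) ∉ _ from not_le.2 ht)
  have hsplit : ∀ (z : V) (r : ℝ), φ (z, r) = φ (z, 0) + r * φ (0, 1) := fun z r => by
    rw [← smul_eq_mul, ← map_smul, ← map_add]
    simp
  have hepi : ∀ (z : V) (r : ℝ), h z ≤ r → φ (z, 0) + r * φ (0, 1) < u := fun z r hzr => by
    simpa only [← hsplit] using hφ (z, r) hzr
  refine ⟨φ.comp (ContinuousLinearMap.inl ℝ V ℝ), φ (0, 1), u, ?_, ?_, hepi⟩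
  · obtain ⟨y, r₀, hy⟩ := hdom
    by_contra! hs
    have hup := hepi y (max r₀ ((u - φ (y, 0)) / φ (0, 1)))
      (hy.trans (EReal.coe_le_coe_iff.2 (le_max_left _ _)))
    have hlarge := (div_le_iff₀ hs).1 (le_max_right r₀ ((u - φ (y, 0)) / φ (0, 1)))
    linarith
  · rwa [hsplit x t] at hu

theorem EConvexOn.exists_affine_le (hlsc : LowerSemicontinuous h) (hconv : EConvexOn h)
    {c : ℝ} (hc : ∀ z, (c : EReal) ≤ h z) {x : V} {t : ℝ} (ht : (t : EReal) < h x) :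
    ∃ ℓ : StrongDual ℝ V, ∀ z, ((t + ℓ (z - x) : ℝ) : EReal) ≤ h z := by
  suffices H : ∃ ℓ : StrongDual ℝ V, ∀ (z : V) (r : ℝ), h z ≤ r → t + ℓ (z - x) ≤ r by
    obtain ⟨ℓ, hℓ⟩ := H
    exact ⟨ℓ, fun z => EReal.le_of_forall_lt_iff_le.1 fun r hr =>
      EReal.coe_le_coe_iff.2 (hℓ z r hr.le)⟩
  by_cases hdom : ∃ (y : V) (r : ℝ), h y ≤ r
  swap
  · exact ⟨0, fun z r hzr => (hdom ⟨z, r, hzr⟩).elim⟩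
  obtain ⟨ℓ, s, u, hs, hu, hepi⟩ := hconv.exists_separating_epigraph hlsc hdom ht
  -- The hyperplane may be vertical (`s = 0`); adding `m` times it, with `m` large, to the
  -- horizontal one at height `c` gives one that is not vertical and still separates `(x, t)`.
  obtain ⟨m, hm, hmt⟩ : ∃ m : ℝ, 0 ≤ m ∧ t - c ≤ m * (ℓ x + t * s - u) := by
    have hgap : 0 < ℓ x + t * s - u := sub_pos.2 hu
    refine ⟨max 0 ((t - c) / (ℓ x + t * s - u)), le_max_left _ _, ?_⟩
    rw [← div_le_iff₀ hgap]
    exact le_max_right _ _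
  have hk : 0 < 1 - m * s := by nlinarith
  refine ⟨(1 - m * s)⁻¹ • (m • ℓ), fun z r hzr => ?_⟩
  have hcr : c ≤ r := EReal.coe_le_coe_iff.1 ((hc z).trans hzr)
  have hmr : m * (ℓ z + r * s) ≤ m * u := mul_le_mul_of_nonneg_left (hepi z r hzr).le hm
  rw [smul_apply, smul_apply, smul_eq_mul, smul_eq_mul,
    map_sub, ← le_sub_iff_add_le', inv_mul_le_iff₀ hk]
  linarith

end ConvexMinorants

section QuadraticEnvelope

variable {V : Type*} [NormedAddCommGroup V] [InnerProductSpace ℝ V] {γ : ℝ} {F : V → EReal}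
  {x : V} {a : ℝ} {v : V}

/-- The quadratic envelope `S_γ²(F)` of an extended-real-valued function, of which `Sgamma2` is the
case of functions with values in `[0,∞]`. -/
def quadEnvelope (γ : ℝ) (F : V → EReal) : V → EReal :=
  SgammaE γ (SgammaE γ F)

/-- The concave quadratic with value `a`, gradient `v` and Hessian `-γ` at `x` lies below `F`. The
values at `x` of such quadratics make up the quadratic envelope. -/
def IsQuadMinorant (γ : ℝ) (F : V → EReal) (x : V) (a : ℝ) (v : V) : Prop :=
  ∀ z : V, ((a + ⟪v, z - x⟫_ℝ - γ / 2 * ‖z - x‖ ^ 2 : ℝ) : EReal) ≤ F z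

theorem IsQuadMinorant.mono {γ' : ℝ} (h : IsQuadMinorant γ F x a v) (hle : γ ≤ γ') :
    IsQuadMinorant γ' F x a v := fun z =>
  (EReal.coe_le_coe_iff.2 (by gcongr)).trans (h z)

theorem IsQuadMinorant.recenter (h : IsQuadMinorant γ F x a v) (w : V) :
    IsQuadMinorant γ F w (a + ⟪v, w - x⟫_ℝ - γ / 2 * ‖w - x‖ ^ 2) (v - γ • (w - x)) := fun z => by
  convert h z using 2
  have hz : z - x = (z - w) + (w - x) := by abel
  rw [hz, norm_add_sq_real, inner_add_right, inner_sub_left, real_inner_smul_left,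
    real_inner_comm (z - w) (w - x)]
  ring

theorem neg_sub_coe_le_neg_coe_iff (e : EReal) (q c : ℝ) :
    -e - (q : EReal) ≤ ((-c : ℝ) : EReal) ↔ ((c - q : ℝ) : EReal) ≤ e := by
  induction e with
  | bot => simp [sub_eq_add_neg, ← EReal.coe_neg]
  | coe r =>
    norm_cast
    constructor <;> intro h <;> linarith
  | top => simp [sub_eq_add_neg]

theorem sgammaE_le_neg_coe_iff (γ : ℝ) (F : V → EReal) (y : V) (c : ℝ) :
    SgammaE γ F y ≤ ((-c : ℝ) : EReal) ↔
      ∀ z, ((c - γ / 2 * ‖z - y‖ ^ 2 : ℝ) : EReal) ≤ F z := by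
  simp only [SgammaE, iSup_le_iff, neg_sub_coe_le_neg_coe_iff]

/-- Completing the square: the quadratics with Hessian `-γ` are those of the form
`z ↦ const - γ / 2 * ‖z - y‖ ^ 2`. -/
theorem isQuadMinorant_smul_sub_iff (γ : ℝ) (F : V → EReal) (x y : V) (a : ℝ) :
    IsQuadMinorant γ F x a (γ • (y - x)) ↔
      SgammaE γ F y ≤ ((-(a + γ / 2 * ‖y - x‖ ^ 2) : ℝ) : EReal) := by
  rw [sgammaE_le_neg_coe_iff]
  refine forall_congr' fun z => ?_
  have hsq : ‖z - y‖ ^ 2 = ‖z - x‖ ^ 2 - 2 * ⟪y - x, z - x⟫_ℝ + ‖y - x‖ ^ 2 := by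
    rw [← sub_sub_sub_cancel_right z y x, norm_sub_sq_real, real_inner_comm]
  rw [hsq, real_inner_smul_left]
  ring_nf

theorem IsQuadMinorant.le_quadEnvelope (hγ : 0 < γ) (h : IsQuadMinorant γ F x a v) :
    (a : EReal) ≤ quadEnvelope γ F x := by
  obtain ⟨y, rfl⟩ : ∃ y, v = γ • (y - x) :=
    ⟨x + γ⁻¹ • v, by rw [add_sub_cancel_left, smul_inv_smul₀ hγ.ne']⟩
  set q : ℝ := γ / 2 * ‖y - x‖ ^ 2
  have hS : SgammaE γ F y ≤ ((-(a + q) : ℝ) : EReal) := (isQuadMinorant_smul_sub_iff γ F x y a).1 h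
  calc (a : EReal) = -((-(a + q) : ℝ) : EReal) - (q : EReal) := by
        norm_cast
        ring
    _ ≤ -(SgammaE γ F y) - (q : EReal) := EReal.sub_le_sub (EReal.neg_le_neg_iff.2 hS) le_rfl
    _ ≤ quadEnvelope γ F x :=
        le_iSup (fun y => -(SgammaE γ F y) - ((γ / 2 * ‖y - x‖ ^ 2 : ℝ) : EReal)) y

theorem exists_isQuadMinorant_of_lt_quadEnvelope (h : (a : EReal) < quadEnvelope γ F x) :
    ∃ v, IsQuadMinorant γ F x a v := by
  obtain ⟨y, hy⟩ := lt_iSup_iff.1 h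
  refine ⟨γ • (y - x), (isQuadMinorant_smul_sub_iff γ F x y a).2 ?_⟩
  rw [EReal.coe_neg, EReal.coe_add]
  exact (EReal.lt_neg_comm.1 (EReal.add_lt_of_lt_sub hy)).le

theorem quadEnvelope_mono {γ₁ γ₂ : ℝ} (hγ : 0 < γ₂) (hle : γ₂ ≤ γ₁) (F : V → EReal) (x : V) :
    quadEnvelope γ₂ F x ≤ quadEnvelope γ₁ F x :=
  EReal.ge_of_forall_gt_iff_ge.1 fun _ ht =>
    let ⟨_, hv⟩ := exists_isQuadMinorant_of_lt_quadEnvelope ht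
    (hv.mono hle).le_quadEnvelope (hγ.trans_le hle)

theorem quadEnvelope_le (γ : ℝ) (F : V → EReal) (x : V) : quadEnvelope γ F x ≤ F x :=
  EReal.ge_of_forall_gt_iff_ge.1 fun t ht => by
    obtain ⟨v, hv⟩ := exists_isQuadMinorant_of_lt_quadEnvelope ht
    simpa using hv x

theorem tendsto_quadEnvelope_atTop {c : ℝ} (hc : ∀ z, (c : EReal) ≤ F z)
    (hF : LowerSemicontinuousAt F x) :
    Tendsto (fun γ : ℝ => quadEnvelope γ F x) atTop (𝓝 (F x)) := by
  refine tendsto_order.2 ⟨fun s hs => ?_, fun s hs =>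
    Eventually.of_forall fun γ => (quadEnvelope_le γ F x).trans_lt hs⟩
  obtain ⟨t, hst, htF⟩ := EReal.lt_iff_exists_real_btwn.1 hs
  obtain ⟨δ, hδ, hball⟩ := Metric.eventually_nhds_iff.1 (hF t htF)
  filter_upwards [eventually_gt_atTop 0, eventually_ge_atTop (2 * (t - c) / δ ^ 2)] with γ hγ hγδ
  suffices hmin : IsQuadMinorant γ F x t 0 from hst.trans_le (hmin.le_quadEnvelope hγ)
  intro z
  rw [inner_zero_left, add_zero]
  rcases lt_or_ge (dist z x) δ with hz | hz
  · refine le_trans (EReal.coe_le_coe_iff.2 ?_) (hball hz).le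
    exact sub_le_self t (by positivity)
  · refine le_trans (EReal.coe_le_coe_iff.2 ?_) (hc z)
    rw [dist_eq_norm] at hz
    rw [div_le_iff₀ (by positivity)] at hγδ
    have : γ * δ ^ 2 ≤ γ * ‖z - x‖ ^ 2 := by gcongr
    linarith

/-- A functional at distance `ε` from `ℓ` differs from it at `z - x` by at most `ε * ‖z - x‖`, which
the quadratic term absorbs up to `ε ^ 2 / (2 * γ)`; so `ℓ` itself need not be an inner product. -/
theorem le_quadEnvelope_of_affine_le (hγ : 0 < γ) {ℓ : StrongDual ℝ V}
    (hℓ : ∀ z, ((a + ℓ (z - x) : ℝ) : EReal) ≤ F z) : (a : EReal) ≤ quadEnvelope γ F x := by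
  refine EReal.ge_of_forall_gt_iff_ge.1 fun t ht => ?_
  have hta : 0 < a - t := sub_pos.2 (EReal.coe_lt_coe_iff.1 ht)
  set ε : ℝ := √(2 * γ * (a - t))
  have hε : ε ^ 2 = 2 * γ * (a - t) := Real.sq_sqrt (by positivity)
  obtain ⟨v, hv⟩ := (denseRange_toDualMap ℝ V).exists_dist_lt ℓ (show 0 < ε by positivity)
  refine IsQuadMinorant.le_quadEnvelope (v := v) hγ fun z =>
    le_trans (EReal.coe_le_coe_iff.2 ?_) (hℓ z)
  have happrox : ⟪v, z - x⟫_ℝ - ℓ (z - x) ≤ ε * ‖z - x‖ := by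
    rw [dist_comm, dist_eq_norm] at hv
    exact (le_abs_self _).trans (ContinuousLinearMap.le_of_opNorm_le _ hv.le (z - x))
  have hamgm : ε * ‖z - x‖ ≤ (a - t) + γ / 2 * ‖z - x‖ ^ 2 := by
    have : 0 ≤ (ε - γ * ‖z - x‖) ^ 2 := sq_nonneg _
    refine le_of_mul_le_mul_left ?_ (mul_pos two_pos hγ)
    linarith
  linarith

theorem EConvexOn.le_quadEnvelope (hγ : 0 < γ) {h : V → EReal} (hlsc : LowerSemicontinuous h)
    (hconv : EConvexOn h) {c : ℝ} (hc : ∀ z, (c : EReal) ≤ F z) (hle : ∀ z, h z ≤ F z) (x : V) :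
    h x ≤ quadEnvelope γ F x := by
  refine EReal.ge_of_forall_gt_iff_ge.1 fun t ht => ?_
  obtain ⟨ℓ, hℓ⟩ := (hconv.max_const c).exists_affine_le (hlsc.sup lowerSemicontinuous_const)
    (fun z => le_max_right (h z) c) (ht.trans_le (le_max_left (h x) c))
  exact le_quadEnvelope_of_affine_le hγ fun z => (hℓ z).trans (max_le (hle z) (hc z))

/-- In other words, `quadEnvelope γ F + γ / 2 * ‖·‖ ^ 2` is convex. -/
theorem quadEnvelope_convex_combination_le (hγ : 0 < γ) (F : V → EReal) (x y : V) {a b : ℝ}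
    (ha : 0 ≤ a) (hb : 0 ≤ b) (hab : a + b = 1) :
    quadEnvelope γ F (a • x + b • y) ≤
      (a : EReal) * quadEnvelope γ F x + (b : EReal) * quadEnvelope γ F y +
        ((γ * (a * b * ‖x - y‖ ^ 2 / 2) : ℝ) : EReal) := by
  refine EReal.ge_of_forall_gt_iff_ge.1 fun t ht => ?_
  obtain ⟨v, hv⟩ := exists_isQuadMinorant_of_lt_quadEnvelope ht
  have hx := mul_le_mul_of_nonneg_left ((hv.recenter x).le_quadEnvelope hγ) (EReal.coe_nonneg.2 ha)
  have hy := mul_le_mul_of_nonneg_left ((hv.recenter y).le_quadEnvelope hγ) (EReal.coe_nonneg.2 hb)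
  refine le_trans (le_of_eq ?_) (add_le_add_left (add_le_add hx hy) _)
  norm_cast
  obtain rfl : b = 1 - a := by linarith
  have h1 : x - (a • x + (1 - a) • y) = (1 - a) • (x - y) := by module
  have h2 : y - (a • x + (1 - a) • y) = (-a) • (x - y) := by module
  rw [h1, h2, norm_smul, norm_smul, inner_smul_right, inner_smul_right, mul_pow, mul_pow,
    Real.norm_eq_abs, Real.norm_eq_abs, sq_abs, sq_abs]
  ring

end QuadraticEnvelope

section Limit

variable {V : Type*} [NormedAddCommGroup V] [InnerProductSpace ℝ V] {F : V → EReal}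

/-- The limit of the quadratic envelopes as `γ → 0⁺`, written as an infimum by monotonicity. -/
def quadEnvelopeLimit (F : V → EReal) (x : V) : EReal :=
  ⨅ γ ∈ Set.Ioi (0 : ℝ), quadEnvelope γ F x

theorem tendsto_quadEnvelope_nhdsGT_zero (F : V → EReal) (x : V) :
    Tendsto (fun γ : ℝ => quadEnvelope γ F x) (𝓝[>] 0) (𝓝 (quadEnvelopeLimit F x)) := by
  rw [quadEnvelopeLimit, ← sInf_image]
  exact MonotoneOn.tendsto_nhdsGT (fun _ hγ _ _ hle => quadEnvelope_mono hγ hle F x)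
    (OrderBot.bddBelow _)

theorem quadEnvelopeLimit_le (F : V → EReal) (x : V) : quadEnvelopeLimit F x ≤ F x :=
  (iInf₂_le (1 : ℝ) (Set.mem_Ioi.2 one_pos)).trans (quadEnvelope_le 1 F x)

theorem EConvexOn.le_quadEnvelopeLimit {h : V → EReal} (hlsc : LowerSemicontinuous h)
    (hconv : EConvexOn h) {c : ℝ} (hc : ∀ z, (c : EReal) ≤ F z) (hle : ∀ z, h z ≤ F z) (x : V) :
    h x ≤ quadEnvelopeLimit F x :=
  le_iInf₂ fun _ hγ => hconv.le_quadEnvelope hγ hlsc hc hle x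

theorem quadEnvelopeLimit_ne_bot {c : ℝ} (hc : ∀ z, (c : EReal) ≤ F z) (x : V) :
    quadEnvelopeLimit F x ≠ ⊥ := by
  have hle : (c : EReal) ≤ quadEnvelopeLimit F x := le_iInf₂ fun γ hγ =>
    le_quadEnvelope_of_affine_le hγ (ℓ := 0) fun z => by simpa using hc z
  exact ((EReal.bot_lt_coe c).trans_le hle).ne'

theorem eConvexOn_quadEnvelopeLimit (hbot : ∀ x, quadEnvelopeLimit F x ≠ ⊥) :
    EConvexOn (quadEnvelopeLimit F) := by
  intro x y a b ha hb hab
  have hmul : ∀ (w : V) (c : ℝ), Tendsto (fun γ : ℝ => (c : EReal) * quadEnvelope γ F w)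
      (𝓝[>] 0) (𝓝 ((c : EReal) * quadEnvelopeLimit F w)) := fun w c =>
    EReal.Tendsto.const_mul (tendsto_quadEnvelope_nhdsGT_zero F w) (.inl (EReal.coe_ne_bot c))
      (.inl (EReal.coe_ne_top c))
  have hmul_bot : ∀ (w : V) {c : ℝ}, 0 ≤ c → (c : EReal) * quadEnvelopeLimit F w ≠ ⊥ :=
    fun w c hc => (EReal.mul_ne_bot _ _).2
      ⟨.inl (EReal.coe_ne_bot c), .inr (hbot w), .inl (EReal.coe_ne_top c),
        .inl (EReal.coe_nonneg.2 hc)⟩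
  have herr : Tendsto (fun γ : ℝ => ((γ * (a * b * ‖x - y‖ ^ 2 / 2) : ℝ) : EReal))
      (𝓝[>] 0) (𝓝 ((0 : ℝ) : EReal)) := by
    refine EReal.tendsto_coe.2 (tendsto_nhdsWithin_of_tendsto_nhds ?_)
    exact (continuous_mul_const (a * b * ‖x - y‖ ^ 2 / 2)).tendsto' 0 0 (zero_mul _)
  have hsum := (EReal.continuousAt_add (p := (_, _)) (.inr (hmul_bot y hb))
    (.inl (hmul_bot x ha))).tendsto.comp ((hmul x a).prodMk_nhds (hmul y b))
  have htot := (EReal.continuousAt_add (p := (_, ((0 : ℝ) : EReal))) (.inr (by simp))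
    (.inr (by simp))).tendsto.comp (hsum.prodMk_nhds herr)
  simp only [EReal.coe_zero, add_zero] at htot
  refine le_of_tendsto_of_tendsto (tendsto_quadEnvelope_nhdsGT_zero F _) htot ?_
  filter_upwards [self_mem_nhdsWithin] with γ hγ
  exact quadEnvelope_convex_combination_le hγ F x y ha hb hab

end Limit

theorem statement2_general {V : Type*} [NormedAddCommGroup V] [InnerProductSpace ℝ V]
    (F : V → EReal) (hlsc : LowerSemicontinuous F) (c : ℝ) (hc : ∀ x, (c : EReal) ≤ F x) :
    (∀ x : V, ∀ γ₁ γ₂ : ℝ, 0 < γ₂ → γ₂ ≤ γ₁ → quadEnvelope γ₂ F x ≤ quadEnvelope γ₁ F x) ∧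
    (∀ x : V, Tendsto (fun γ : ℝ => quadEnvelope γ F x) atTop (𝓝 (F x))) ∧
    (∃ g : V → EReal,
      (∀ x : V, Tendsto (fun γ : ℝ => quadEnvelope γ F x) (𝓝[>] 0) (𝓝 (g x))) ∧
      EConvexOn g ∧ (∀ x : V, g x ≤ F x) ∧
      (∀ h : V → EReal, LowerSemicontinuous h → EConvexOn h →
        (∀ x : V, h x ≤ F x) → ∀ x : V, h x ≤ g x)) :=
  ⟨fun x _ _ hγ hle => quadEnvelope_mono hγ hle F x,
    fun x => tendsto_quadEnvelope_atTop hc (hlsc x),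
    quadEnvelopeLimit F,
    tendsto_quadEnvelope_nhdsGT_zero F,
    eConvexOn_quadEnvelopeLimit (quadEnvelopeLimit_ne_bot hc),
    quadEnvelopeLimit_le F,
    fun _ hh hconv hle => hconv.le_quadEnvelopeLimit hh hc hle⟩

/-- For `f : V → [0,∞]` l.s.c.: (i) `γ ↦ S_γ²(f)(x)` is non-decreasing on
`(0,∞)`; (ii) `S_γ²(f)(x) → f(x)` as `γ → ∞`; (iii) the pointwise limit `g` as `γ → 0⁺` exists,
is convex, and `CE(f) ≤ g ≤ f` (i.e. `g ≤ f` and `g` dominates every l.s.c. convex function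
below `f`). -/
theorem statement2 {V : Type*} [NormedAddCommGroup V] [InnerProductSpace ℝ V]
    [CompleteSpace V] [TopologicalSpace.SeparableSpace V]
    (f : V → ℝ≥0∞) (hlsc : LowerSemicontinuous f) :
    (∀ x : V, ∀ γ₁ γ₂ : ℝ, 0 < γ₂ → γ₂ ≤ γ₁ → Sgamma2 γ₂ f x ≤ Sgamma2 γ₁ f x) ∧
    (∀ x : V, Tendsto (fun γ : ℝ => Sgamma2 γ f x) atTop (nhds (f x : EReal))) ∧
    (∃ g : V → EReal,
      (∀ x : V, Tendsto (fun γ : ℝ => Sgamma2 γ f x) (nhdsWithin 0 (Set.Ioi 0)) (nhds (g x))) ∧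
      EConvexOn g ∧ (∀ x : V, g x ≤ (f x : EReal)) ∧
      (∀ h : V → EReal, LowerSemicontinuous h → EConvexOn h →
        (∀ x : V, h x ≤ (f x : EReal)) → ∀ x : V, h x ≤ g x)) :=
  statement2_general (fun x => (f x : EReal))
    (continuous_coe_ennreal_ereal.comp_lowerSemicontinuous hlsc
      EReal.coe_ennreal_strictMono.monotone)
    0 (fun x => EReal.coe_ennreal_nonneg (f x))
end
end

section
/- Let (V_j)_{j=1}^{d}, where d ∈ ℕ ∪ {∞}, be separable real Hilbert spaces and let V = ⊕_{j=1}^{d} V_j be their Hilbert space direct sum. Suppose f_j : V_j → [0,∞] for each j, and define F(x) = Σ_{j=1}^{d} f_j(x_j) for x = ⊕_{j=1}^{d} x_j with x_j ∈ V_j (the sum taken in [0,∞]). Then for every y = ⊕_{j=1}^{d} y_j ∈ V and every γ > 0, S_{V,γ}(F)(y) = Σ_{j=1}^{d} S_{V_j,γ}(f_j)(y_j). -/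
open scoped InnerProductSpace RealInnerProductSpace ENNReal Topology
open Filter

noncomputable section

/-- The truncation of an extended real number to `[0,∞]`: negative values map to `0`,
`⊤` maps to `∞`. For nonpositive `x`, `erealToENNReal (-x)` recovers `-x` faithfully. -/
def erealToENNReal (x : EReal) : ℝ≥0∞ :=
  if x = ⊤ then ⊤ else ENNReal.ofReal x.toReal

/-!
Negating turns `S_γ f` into the Moreau envelope `inf_x (f x + (γ/2) ‖x - y‖²)`, an infimum in
`[0, ∞]`. On the direct sum the objective splits coordinatewise, since `‖x - y‖²` is itself the sum
of the `‖x_j - y_j‖²`. The infimum may then be taken over all of `∏_j V_j`: where the sum is finite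
so is `∑_j ‖x_j - y_j‖²`, hence such an `x` lies in the direct sum. Over the full product, and for
countably many indices, an infimum of sums is the sum of the infima.
-/

/-- The Moreau envelope of `f` with weight `c` and exponent `q`, i.e. the infimal convolution of `f`
with `c * dist ^ q`, on extended metric spaces. The classical Moreau envelope of parameter `1 / γ`
is the case `c = γ / 2`, `q = 2`. -/
def moreauEnvelope {X : Type*} [PseudoEMetricSpace X] (c : ℝ≥0∞) (q : ℝ) (f : X → ℝ≥0∞) (y : X) :
    ℝ≥0∞ :=
  ⨅ x, f x + c * edist x y ^ q

theorem neg_coe_iInf_eq_iSup_neg_coe {α : Sort*} (g : α → ℝ≥0∞) :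
    -((⨅ a, g a : ℝ≥0∞) : EReal) = ⨆ a, -(g a : EReal) :=
  Antitone.map_iInf_of_continuousAt (f := fun a : ℝ≥0∞ => -(a : EReal))
    continuous_coe_ennreal_ereal.neg.continuousAt
    (fun _ _ h => EReal.neg_le_neg_iff.2 (EReal.coe_ennreal_le_coe_ennreal_iff.2 h)) rfl

theorem neg_coe_sub_coe_eq_neg_coe_add_ofReal (a : ℝ≥0∞) {r : ℝ} (hr : 0 ≤ r) :
    -(a : EReal) - (r : EReal) = -((a + ENNReal.ofReal r : ℝ≥0∞) : EReal) := by
  rw [EReal.coe_ennreal_add, EReal.coe_ennreal_ofReal, max_eq_left hr,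
    EReal.neg_add (Or.inr (EReal.coe_ne_top r)) (Or.inr (EReal.coe_ne_bot r))]

theorem ofReal_mul_norm_sub_sq {V : Type*} [SeminormedAddCommGroup V] {c : ℝ} (hc : 0 ≤ c)
    (x y : V) :
    ENNReal.ofReal (c * ‖x - y‖ ^ 2) = ENNReal.ofReal c * edist x y ^ (2 : ℝ) := by
  rw [ENNReal.ofReal_mul hc, ENNReal.ofReal_pow (norm_nonneg _), ofReal_norm,
    edist_eq_enorm_sub, ENNReal.rpow_two]

theorem Sgamma_eq_neg_moreauEnvelope {V : Type*} [NormedAddCommGroup V] [InnerProductSpace ℝ V]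
    {γ : ℝ} (hγ : 0 ≤ γ) (f : V → ℝ≥0∞) (y : V) :
    Sgamma γ f y = -(moreauEnvelope (ENNReal.ofReal (γ / 2)) 2 f y : EReal) := by
  have hterm (x : V) : -(f x : EReal) - ((γ / 2 * ‖x - y‖ ^ 2 : ℝ) : EReal) =
      -((f x + ENNReal.ofReal (γ / 2) * edist x y ^ (2 : ℝ) : ℝ≥0∞) : EReal) := by
    rw [neg_coe_sub_coe_eq_neg_coe_add_ofReal _ (by positivity),
      ofReal_mul_norm_sub_sq (by positivity)]
  simp only [Sgamma, SgammaE, moreauEnvelope, hterm, neg_coe_iInf_eq_iSup_neg_coe]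

theorem erealToENNReal_coe (a : ℝ≥0∞) : erealToENNReal (a : EReal) = a :=
  EReal.toENNReal_coe

theorem iInf_pi_tsum_eq_tsum_iInf {ι : Type*} [Countable ι] {α : ι → Type*}
    (g : ∀ i, α i → ℝ≥0∞) :
    ⨅ x : ∀ i, α i, ∑' i, g i (x i) = ∑' i, ⨅ a, g i a := by
  apply le_antisymm
  · refine ENNReal.le_of_forall_pos_le_add fun ε hε hfin => ?_
    obtain ⟨δ, hδ, hδε⟩ :=
      ENNReal.exists_pos_sum_of_countable' (ENNReal.coe_ne_zero.2 hε.ne') ι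
    have exists_almost_minimizer (i : ι) : ∃ a, g i a < (⨅ a, g i a) + δ i :=
      iInf_lt_iff.1 (ENNReal.lt_add_right (ENNReal.ne_top_of_tsum_ne_top hfin.ne i) (hδ i).ne')
    choose x hx using exists_almost_minimizer
    calc ⨅ x : ∀ i, α i, ∑' i, g i (x i)
        ≤ ∑' i, g i (x i) := iInf_le _ x
      _ ≤ ∑' i, ((⨅ a, g i a) + δ i) := ENNReal.tsum_le_tsum fun i => (hx i).le
      _ = (∑' i, ⨅ a, g i a) + ∑' i, δ i := ENNReal.tsum_add
      _ ≤ (∑' i, ⨅ a, g i a) + ε := by gcongr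
  · exact le_iInf fun x => ENNReal.tsum_le_tsum fun i => iInf_le _ (x i)

theorem enorm_rpow_eq_ofReal_norm_rpow {E : Type*} [SeminormedAddGroup E] {q : ℝ} (hq : 0 ≤ q)
    (x : E) : ‖x‖ₑ ^ q = ENNReal.ofReal (‖x‖ ^ q) := by
  rw [← ofReal_norm, ENNReal.ofReal_rpow_of_nonneg (norm_nonneg x) hq]

section lp

variable {ι : Type*} {G : ι → Type*} [∀ i, NormedAddCommGroup (G i)] {p : ℝ≥0∞}

theorem memℓp_of_tsum_enorm_rpow_ne_top {z : ∀ i, G i} (h : ∑' i, ‖z i‖ₑ ^ p.toReal ≠ ∞) :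
    Memℓp z p := by
  refine memℓp_gen ?_
  simpa only [← ENNReal.toReal_rpow, toReal_enorm] using ENNReal.summable_toReal h

theorem lp_enorm_rpow_eq_tsum [Fact (1 ≤ p)] (hp : p ≠ ∞) (z : lp G p) :
    ‖z‖ₑ ^ p.toReal = ∑' i, ‖z i‖ₑ ^ p.toReal := by
  have hpos : 0 < p.toReal := ENNReal.toReal_pos (zero_lt_one.trans_le Fact.out).ne' hp
  simp only [enorm_rpow_eq_ofReal_norm_rpow hpos.le]
  rw [lp.norm_rpow_eq_tsum hpos, ENNReal.ofReal_tsum_of_nonneg (fun i => by positivity)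
    ((lp.memℓp z).summable hpos)]

theorem lp_edist_rpow_eq_tsum [Fact (1 ≤ p)] (hp : p ≠ ∞) (x y : lp G p) :
    edist x y ^ p.toReal = ∑' i, edist (x i) (y i) ^ p.toReal := by
  simp only [edist_eq_enorm_sub]
  exact lp_enorm_rpow_eq_tsum hp (x - y)

theorem memℓp_of_tsum_edist_rpow_ne_top {x y : ∀ i, G i} (hy : Memℓp y p)
    (h : ∑' i, edist (x i) (y i) ^ p.toReal ≠ ∞) : Memℓp x p := by
  simp only [edist_eq_enorm_sub] at h
  have hsub : Memℓp (x - y) p := memℓp_of_tsum_enorm_rpow_ne_top h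
  simpa only [sub_add_cancel] using hsub.add hy

theorem iInf_lp_eq_iInf_pi {β : Type*} [CompleteLattice β] {F : (∀ i, G i) → β}
    (hF : ∀ x, F x ≠ ⊤ → Memℓp x p) :
    ⨅ x : lp G p, F x = ⨅ x : ∀ i, G i, F x := by
  apply le_antisymm
  · refine le_iInf fun x => ?_
    by_cases hx : F x = ⊤
    · exact hx ▸ le_top
    · exact iInf_le (fun z : lp G p => F z) ⟨x, hF x hx⟩
  · exact le_iInf fun x => iInf_le F x

theorem moreauEnvelope_lp_tsum [Countable ι] [Fact (1 ≤ p)] (hp : p ≠ ∞) {c : ℝ≥0∞} (hc : c ≠ 0)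
    (f : ∀ i, G i → ℝ≥0∞) (y : lp G p) :
    moreauEnvelope c p.toReal (fun x : lp G p => ∑' i, f i (x i)) y =
      ∑' i, moreauEnvelope c p.toReal (f i) (y i) := by
  have hsplit (x : ∀ i, G i) : ∑' i, (f i (x i) + c * edist (x i) (y i) ^ p.toReal) =
      ∑' i, f i (x i) + c * ∑' i, edist (x i) (y i) ^ p.toReal := by
    rw [ENNReal.tsum_add, ENNReal.tsum_mul_left]
  have hmem (x : ∀ i, G i)
      (hx : ∑' i, (f i (x i) + c * edist (x i) (y i) ^ p.toReal) ≠ ∞) : Memℓp x p := by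
    rw [hsplit, ENNReal.add_ne_top] at hx
    exact memℓp_of_tsum_edist_rpow_ne_top (lp.memℓp y)
      (ENNReal.lt_top_of_mul_ne_top_right hx.2 hc).ne
  calc moreauEnvelope c p.toReal (fun x : lp G p => ∑' i, f i (x i)) y
      = ⨅ x : lp G p, ∑' i, (f i (x i) + c * edist (x i) (y i) ^ p.toReal) := by
        simp only [moreauEnvelope, lp_edist_rpow_eq_tsum hp, hsplit]
    _ = ⨅ x : ∀ i, G i, ∑' i, (f i (x i) + c * edist (x i) (y i) ^ p.toReal) :=
        iInf_lp_eq_iInf_pi hmem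
    _ = ∑' i, moreauEnvelope c p.toReal (f i) (y i) :=
        iInf_pi_tsum_eq_tsum_iInf fun i a => f i a + c * edist a (y i) ^ p.toReal

end lp

theorem statement3_general {ι : Type*} [Countable ι]
    (G : ι → Type*) [∀ i, NormedAddCommGroup (G i)] [∀ i, InnerProductSpace ℝ (G i)]
    (f : ∀ i, G i → ℝ≥0∞) (γ : ℝ) (hγ : 0 < γ) (y : lp G 2) :
    Sgamma γ (fun x : lp G 2 => ∑' i, f i (x i)) y =
      -(((∑' i, erealToENNReal (-(Sgamma γ (f i) (y i)))) : ℝ≥0∞) : EReal) := by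
  have hweight : ENNReal.ofReal (γ / 2) ≠ 0 := (ENNReal.ofReal_pos.2 (half_pos hγ)).ne'
  have hsum := moreauEnvelope_lp_tsum ENNReal.ofNat_ne_top hweight f y
  rw [ENNReal.toReal_ofNat] at hsum
  simp only [Sgamma_eq_neg_moreauEnvelope hγ.le, neg_neg, erealToENNReal_coe, hsum]

/-- For a Hilbert space direct sum `V = ⊕_j V_j` and
`F(x) = Σ_j f_j(x_j)`, one has `S_{V,γ}(F)(y) = Σ_j S_{V_j,γ}(f_j)(y_j)` (the right-hand side
being a sum of nonpositive extended reals, written as minus the `[0,∞]`-valued sum of the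
negatives of its terms). -/
theorem statement3 {ι : Type*} [Countable ι]
    (G : ι → Type*) [∀ i, NormedAddCommGroup (G i)] [∀ i, InnerProductSpace ℝ (G i)]
    [∀ i, CompleteSpace (G i)] [∀ i, TopologicalSpace.SeparableSpace (G i)]
    (f : ∀ i, G i → ℝ≥0∞) (γ : ℝ) (hγ : 0 < γ) (y : lp G 2) :
    Sgamma γ (fun x : lp G 2 => ∑' i, f i (x i)) y =
      -(((∑' i, erealToENNReal (-(Sgamma γ (f i) (y i)))) : ℝ≥0∞) : EReal) :=
  statement3_general G f γ hγ y
end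
end

section
/- Let V be a separable Hilbert space and let 𝐇(V) ⊂ B₂(V,V) denote the real Hilbert space of self-adjoint Hilbert–Schmidt operators on V with the Hilbert–Schmidt inner product. Suppose f : ℝ^{dim V} → [0,∞] is invariant under permutations of the coordinates (when dim V = ∞, identifying ℝ^{dim V} with ℓ²(ℕ) and allowing arbitrary bijections of ℕ), and define F : 𝐇(V) → [0,∞] by F(X) = f(λ(X)), where λ(X) is the sequence of eigenvalues of X counted with multiplicity. Then for every Y ∈ 𝐇(V) and every γ > 0, S_{𝐇(V),γ}(F)(Y) = S_{ℝ^{dim V},γ}(f)(λ(Y)). -/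
open scoped InnerProductSpace RealInnerProductSpace ENNReal Topology
open Filter

noncomputable section

/-- `X` is a Hilbert–Schmidt operator, expressed with respect to the Hilbert basis `e`
(the condition is independent of the choice of basis). -/
def IsHS {V₁ V₂ κ : Type*} [NormedAddCommGroup V₁] [InnerProductSpace ℝ V₁]
    [NormedAddCommGroup V₂] [InnerProductSpace ℝ V₂]
    (e : HilbertBasis κ ℝ V₁) (X : V₁ →L[ℝ] V₂) : Prop :=
  Summable fun k => ‖X (e k)‖ ^ 2

/-- The Hilbert–Schmidt inner product `⟨X,Y⟩_{B₂}`, computed with respect to the Hilbert basis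
`e` (the value is independent of the choice of basis for Hilbert–Schmidt operators). -/
def hsInner {V₁ V₂ κ : Type*} [NormedAddCommGroup V₁] [InnerProductSpace ℝ V₁]
    [NormedAddCommGroup V₂] [InnerProductSpace ℝ V₂]
    (e : HilbertBasis κ ℝ V₁) (X Y : V₁ →L[ℝ] V₂) : ℝ :=
  ∑' k, ⟪X (e k), Y (e k)⟫_ℝ

/-- The squared Hilbert–Schmidt distance `‖X - Y‖²_{B₂}`, computed with respect to the
Hilbert basis `e`. -/
def hsDistSq {V₁ V₂ κ : Type*} [NormedAddCommGroup V₁] [InnerProductSpace ℝ V₁]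
    [NormedAddCommGroup V₂] [InnerProductSpace ℝ V₂]
    (e : HilbertBasis κ ℝ V₁) (X Y : V₁ →L[ℝ] V₂) : ℝ :=
  ∑' k, ‖X (e k) - Y (e k)‖ ^ 2

/-- The S-transform on the Hilbert space `B₂(V₁,V₂)` of Hilbert–Schmidt operators:
`S_{B₂,γ}(F)(Y) = sup_{X ∈ B₂} ( -F(X) - (γ/2)‖X-Y‖²_{B₂} )`. -/
def SHS {V₁ V₂ κ : Type*} [NormedAddCommGroup V₁] [InnerProductSpace ℝ V₁]
    [NormedAddCommGroup V₂] [InnerProductSpace ℝ V₂]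
    (e : HilbertBasis κ ℝ V₁) (γ : ℝ) (F : (V₁ →L[ℝ] V₂) → EReal) (Y : V₁ →L[ℝ] V₂) : EReal :=
  ⨆ X : {X : V₁ →L[ℝ] V₂ // IsHS e X},
    (-(F X.1) - ((γ / 2 * hsDistSq e X.1 Y : ℝ) : EReal))

/-- The S-transform on the real Hilbert space `𝐇(V) ⊆ B₂(V,V)` of self-adjoint
Hilbert–Schmidt operators: `S_{𝐇(V),γ}(F)(Y) = sup_{X ∈ 𝐇(V)} ( -F(X) - (γ/2)‖X-Y‖²_{B₂} )`. -/
def SHSsa {V κ : Type*} [NormedAddCommGroup V] [InnerProductSpace ℝ V]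
    (e : HilbertBasis κ ℝ V) (γ : ℝ) (F : (V →L[ℝ] V) → EReal) (Y : V →L[ℝ] V) : EReal :=
  ⨆ X : {X : V →L[ℝ] V // IsHS e X ∧ ∀ x y : V, ⟪X x, y⟫_ℝ = ⟪x, X y⟫_ℝ},
    (-(F X.1) - ((γ / 2 * hsDistSq e X.1 Y : ℝ) : EReal))

/-! Write `X = ∑ᵢ lᵢ vᵢ ⊗ vᵢ` and `Y = ∑ⱼ mⱼ wⱼ ⊗ wⱼ`. Since the Hilbert–Schmidt norm does not
depend on the basis, `‖X - Y‖² = ∑ᵢⱼ (lᵢ - mⱼ)² ⟨vᵢ, wⱼ⟩²`, where the weights `⟨vᵢ, wⱼ⟩²` form a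
doubly stochastic array. The cross term `∑ᵢⱼ lᵢ mⱼ ⟨vᵢ, wⱼ⟩²` is, up to an arbitrarily small error,
at most the inner product of `m` with a rearrangement of `l`. In finite dimension this is
Birkhoff's theorem, without error. In infinite dimension one truncates to a finite set `S` of
indices, completes the substochastic matrix `A` obtained there to a doubly stochastic one on
`S ⊕ S` with off-diagonal blocks the row and column defects of `A`, and applies Birkhoff's theorem
with the second copy of `S` placed outside `S`, where the truncated sequences vanish. Hence passing
from `X` to the rearranged sequence costs nothing in the supremum, `f` being invariant under
permutations. Conversely, a sequence `x` is matched exactly by the operator with eigenvalues `x` in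
the eigenbasis of `Y`. -/

open scoped lp Cardinal

section SquareSummable

variable {ι : Type*} {G : ι → Type*} [∀ i, NormedAddCommGroup (G i)]

theorem tsum_enorm_sq_ne_top_iff_summable {x : ∀ i, G i} :
    ∑' i, ‖x i‖ₑ ^ 2 ≠ ∞ ↔ Summable fun i => ‖x i‖ ^ 2 := by
  simp only [enorm_eq_nnnorm, ← ENNReal.coe_pow, ENNReal.tsum_coe_ne_top_iff_summable,
    ← NNReal.summable_coe, NNReal.coe_pow, coe_nnnorm]

theorem toReal_tsum_enorm_sq (x : ∀ i, G i) :
    (∑' i, ‖x i‖ₑ ^ 2).toReal = ∑' i, ‖x i‖ ^ 2 := by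
  rw [ENNReal.tsum_toReal_eq fun i => by finiteness]
  simp only [ENNReal.toReal_pow, toReal_enorm]

theorem memℓp_two_iff_tsum_enorm_sq_ne_top {x : ∀ i, G i} :
    Memℓp x 2 ↔ ∑' i, ‖x i‖ₑ ^ 2 ≠ ∞ := by
  rw [tsum_enorm_sq_ne_top_iff_summable, memℓp_gen_iff (by norm_num)]
  simp only [ENNReal.toReal_ofNat, Real.rpow_ofNat]

theorem hasSum_norm_sq_lp (x : lp G 2) : HasSum (fun i => ‖x i‖ ^ 2) (‖x‖ ^ 2) := by
  simpa using lp.hasSum_norm (by norm_num) x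

theorem tsum_enorm_sq_lp (x : lp G 2) : ∑' i, ‖x i‖ₑ ^ 2 = ‖x‖ₑ ^ 2 := by
  rw [← ENNReal.toReal_eq_toReal_iff'
      (memℓp_two_iff_tsum_enorm_sq_ne_top.1 (lp.memℓp x)) (by finiteness),
    toReal_tsum_enorm_sq, (hasSum_norm_sq_lp x).tsum_eq, ENNReal.toReal_pow, toReal_enorm]

end SquareSummable

section HilbertBases

variable {𝕜 E ι κ : Type*} [RCLike 𝕜] [NormedAddCommGroup E] [InnerProductSpace 𝕜 E]

theorem hasSum_norm_sq_inner (b : HilbertBasis ι 𝕜 E) (x : E) :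
    HasSum (fun i => ‖⟪b i, x⟫_𝕜‖ ^ 2) (‖x‖ ^ 2) := by
  simpa only [b.repr_apply_apply, b.repr.norm_map] using hasSum_norm_sq_lp (b.repr x)

theorem tsum_enorm_sq_inner (b : HilbertBasis ι 𝕜 E) (x : E) :
    ∑' i, ‖⟪b i, x⟫_𝕜‖ₑ ^ 2 = ‖x‖ₑ ^ 2 := by
  simpa only [b.repr_apply_apply, b.repr.enorm_map] using tsum_enorm_sq_lp (b.repr x)

theorem exists_inner_hilbertBasis_ne_zero (b : HilbertBasis ι 𝕜 E) {x : E} (hx : x ≠ 0) :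
    ∃ i, ⟪b i, x⟫_𝕜 ≠ 0 := by
  contrapose! hx
  simpa [hx] using (tsum_enorm_sq_inner b x).symm

theorem finite_of_hilbertBasis_finite [Finite ι] (b : HilbertBasis ι 𝕜 E)
    (c : HilbertBasis κ 𝕜 E) : Finite κ := by
  have := Fintype.ofFinite ι
  have : FiniteDimensional 𝕜 E := b.toOrthonormalBasis.toBasis.finiteDimensional_of_finite
  exact c.orthonormal.linearIndependent.finite

theorem nonempty_embedding_of_hilbertBasis_infinite [Infinite ι] (b : HilbertBasis ι 𝕜 E)
    (c : HilbertBasis κ 𝕜 E) : Nonempty (κ ↪ ι) := by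
  choose f hf using fun k =>
    exists_inner_hilbertBasis_ne_zero b (c.orthonormal.ne_zero k)
  have hfiber (i : ι) : (f ⁻¹' {i}).Countable := by
    refine (hasSum_norm_sq_inner c (b i)).summable.countable_support.mono ?_
    rintro k rfl
    simpa [inner_eq_zero_symm] using hf k
  rw [← Cardinal.lift_mk_le']
  calc Cardinal.lift #κ ≤ Cardinal.lift #ι * ℵ₀ :=
        Cardinal.lift_mk_le_lift_mk_mul_of_lift_mk_preimage_le f fun i =>
          Cardinal.lift_le_aleph0.2 (hfiber i).le_aleph0
    _ = Cardinal.lift #ι := Cardinal.mul_aleph0_eq (by simp)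

theorem nonempty_equiv_of_hilbertBasis (b : HilbertBasis ι 𝕜 E) (c : HilbertBasis κ 𝕜 E) :
    Nonempty (ι ≃ κ) := by
  cases finite_or_infinite ι
  · have := finite_of_hilbertBasis_finite b c
    have := Fintype.ofFinite ι
    have := Fintype.ofFinite κ
    exact ⟨b.toOrthonormalBasis.toBasis.indexEquiv c.toOrthonormalBasis.toBasis⟩
  · have : Infinite κ := not_finite_iff_infinite.1 fun _ =>
      not_finite_iff_infinite.2 ‹_› (finite_of_hilbertBasis_finite c b)
    obtain ⟨φ⟩ := nonempty_embedding_of_hilbertBasis_infinite c b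
    obtain ⟨ψ⟩ := nonempty_embedding_of_hilbertBasis_infinite b c
    exact φ.antisymm ψ

theorem exists_hilbertBasis_reindex [CompleteSpace E] (b : HilbertBasis κ 𝕜 E) (φ : ι ≃ κ) :
    ∃ c : HilbertBasis ι 𝕜 E, ∀ i, c i = b (φ i) := by
  have hspan : ⊤ ≤ (Submodule.span 𝕜 (Set.range (b ∘ φ))).topologicalClosure := by
    rw [EquivLike.range_comp, b.dense_span]
  exact ⟨HilbertBasis.mk (b.orthonormal.comp φ φ.injective) hspan,
    fun i => congrFun (HilbertBasis.coe_mk _ hspan) i⟩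

theorem exists_hilbertBasis_sigma [CompleteSpace E] {α : Type*} {κ : α → Type*}
    {U : α → Submodule 𝕜 E} (hU : OrthogonalFamily 𝕜 (fun a => U a) fun a => (U a).subtypeₗᵢ)
    (htop : (⨆ a, U a)ᗮ = ⊥) (c : ∀ a, HilbertBasis (κ a) 𝕜 (U a)) :
    ∃ b : HilbertBasis (Σ a, κ a) 𝕜 E, ∀ p, b p = c p.1 p.2 := by
  let u (p : Σ a, κ a) : E := c p.1 p.2
  have hu : Orthonormal 𝕜 u := hU.orthonormal_sigma_orthonormal fun a => (c a).orthonormal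
  have hle (a : α) : U a ≤ (Submodule.span 𝕜 (Set.range u)).topologicalClosure := by
    calc U a = Submodule.map ((U a).subtypeL : U a →ₗ[𝕜] E)
            (Submodule.span 𝕜 (Set.range (c a))).topologicalClosure := by
          rw [(c a).dense_span]
          exact (Submodule.map_subtype_top _).symm
      _ ≤ (Submodule.map ((U a).subtypeL : U a →ₗ[𝕜] E)
            (Submodule.span 𝕜 (Set.range (c a)))).topologicalClosure :=
          Submodule.topologicalClosure_map _ _
      _ ≤ (Submodule.span 𝕜 (Set.range u)).topologicalClosure := by
          refine Submodule.topologicalClosure_mono ((Submodule.map_span_le _ _ _).2 ?_)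
          rintro _ ⟨k, rfl⟩
          exact Submodule.subset_span ⟨⟨a, k⟩, rfl⟩
  have hspan : (Submodule.span 𝕜 (Set.range u))ᗮ = ⊥ := by
    rw [← Submodule.orthogonal_closure, eq_bot_iff, ← htop]
    exact Submodule.orthogonal_le (iSup_le hle)
  exact ⟨.mkOfOrthogonalEqBot hu hspan,
    fun p => congrFun (HilbertBasis.coe_mkOfOrthogonalEqBot hu hspan) p⟩

end HilbertBases

section HilbertSchmidt

variable {𝕜 E F ι κ : Type*} [RCLike 𝕜]
  [NormedAddCommGroup E] [InnerProductSpace 𝕜 E] [NormedAddCommGroup F] [InnerProductSpace 𝕜 F]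

/-- The squared Hilbert–Schmidt norm of `Z`, computed in the Hilbert basis `e`. It takes the value
`∞` off the Hilbert–Schmidt class, so that its sums can be exchanged without side conditions. -/
def hsENormSq (e : HilbertBasis κ 𝕜 E) (Z : E →L[𝕜] F) : ℝ≥0∞ := ∑' k, ‖Z (e k)‖ₑ ^ 2

theorem hsENormSq_eq_tsum_enorm_inner_sq (e : HilbertBasis κ 𝕜 E) (b : HilbertBasis ι 𝕜 F)
    (Z : E →L[𝕜] F) : hsENormSq e Z = ∑' p : ι × κ, ‖⟪b p.1, Z (e p.2)⟫_𝕜‖ₑ ^ 2 := by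
  rw [ENNReal.tsum_prod', ENNReal.tsum_comm]
  exact tsum_congr fun k => (tsum_enorm_sq_inner b _).symm

theorem hsENormSq_adjoint [CompleteSpace E] [CompleteSpace F] (e : HilbertBasis κ 𝕜 E)
    (b : HilbertBasis ι 𝕜 F) (Z : E →L[𝕜] F) :
    hsENormSq b (ContinuousLinearMap.adjoint Z) = hsENormSq e Z := by
  rw [hsENormSq_eq_tsum_enorm_inner_sq b e, hsENormSq_eq_tsum_enorm_inner_sq e b,
    ← (Equiv.prodComm ι κ).tsum_eq]
  refine tsum_congr fun p => ?_
  rw [Equiv.prodComm_apply, Prod.fst_swap, Prod.snd_swap,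
    ContinuousLinearMap.adjoint_inner_right, ← inner_conj_symm, RCLike.enorm_conj]

theorem hsENormSq_eq_of_hilbertBasis [CompleteSpace E] [CompleteSpace F] (e : HilbertBasis κ 𝕜 E)
    (b : HilbertBasis ι 𝕜 E) (Z : E →L[𝕜] F) : hsENormSq e Z = hsENormSq b Z := by
  obtain ⟨_, c, -⟩ := exists_hilbertBasis 𝕜 F
  rw [← hsENormSq_adjoint e c, ← hsENormSq_adjoint b c]

theorem enorm_sq_le_hsENormSq [CompleteSpace E] [CompleteSpace F] (e : HilbertBasis κ 𝕜 E)
    (Z : E →L[𝕜] F) : ‖Z‖ₑ ^ 2 ≤ hsENormSq e Z := by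
  suffices ‖Z‖ₑ ≤ hsENormSq e Z ^ (2⁻¹ : ℝ) by
    rwa [ENNReal.le_rpow_inv_iff two_pos, ENNReal.rpow_ofNat] at this
  rw [← ContinuousLinearMap.adjoint.enorm_map Z]
  refine ContinuousLinearMap.opENorm_le_bound _ fun y => ?_
  rw [← ENNReal.pow_le_pow_left_iff two_ne_zero, mul_pow, ← ENNReal.rpow_mul_natCast,
    Nat.cast_ofNat, inv_mul_cancel₀ two_ne_zero, ENNReal.rpow_one, ← tsum_enorm_sq_inner e,
    hsENormSq, ← ENNReal.tsum_mul_right]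
  gcongr with k
  rw [ContinuousLinearMap.adjoint_inner_right, ← mul_pow]
  gcongr
  exact ENNReal.coe_le_coe.2 (nnnorm_inner_le_nnnorm _ _)

theorem hsENormSq_sub_sum_rankOne (e : HilbertBasis κ 𝕜 E) (Z : E →L[𝕜] F) (s : Finset κ) :
    hsENormSq e (Z - ∑ k ∈ s, InnerProductSpace.rankOne 𝕜 (Z (e k)) (e k)) =
      ∑' k : {k // k ∉ s}, ‖Z (e k)‖ₑ ^ 2 := by
  classical
  refine .trans (tsum_congr fun k => ?_) (tsum_subtype {k | k ∉ s} fun k => ‖Z (e k)‖ₑ ^ 2).symm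
  by_cases hk : k ∈ s <;>
    simp [hk, sum_apply, orthonormal_iff_ite.1 e.orthonormal]

theorem isCompactOperator_rankOne (x : F) (y : E) :
    IsCompactOperator (InnerProductSpace.rankOne 𝕜 x y) :=
  IsCompactOperator.clm_comp (f := innerSL 𝕜 y)
    (isCompactOperator_of_locallyCompactSpace_dom _) (ContinuousLinearMap.toSpanSingleton 𝕜 x)

theorem isCompactOperator_of_hsENormSq_ne_top [CompleteSpace E] [CompleteSpace F]
    (e : HilbertBasis κ 𝕜 E) {Z : E →L[𝕜] F} (hZ : hsENormSq e Z ≠ ∞) : IsCompactOperator Z := by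
  classical
  let T (s : Finset κ) : E →L[𝕜] F := ∑ k ∈ s, InnerProductSpace.rankOne 𝕜 (Z (e k)) (e k)
  have hT (s : Finset κ) : IsCompactOperator (T s) :=
    (compactOperator (RingHom.id 𝕜) E F).sum_mem fun k _ => isCompactOperator_rankOne _ _
  have hlim : Tendsto (fun s => ‖Z - T s‖ₑ ^ 2) atTop (𝓝 0) :=
    tendsto_of_tendsto_of_tendsto_of_le_of_le tendsto_const_nhds
      (ENNReal.tendsto_tsum_compl_atTop_zero hZ) (fun _ => zero_le)
      fun s => (enorm_sq_le_hsENormSq e _).trans_eq (hsENormSq_sub_sum_rankOne e Z s)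
  refine isCompactOperator_of_tendsto (l := atTop) (F := T) ?_ (.of_forall hT)
  rw [tendsto_iff_enorm_sub_tendsto_zero]
  simpa [← ENNReal.rpow_natCast_mul, enorm_sub_rev] using hlim.ennrpow_const 2⁻¹

end HilbertSchmidt

section HilbertSchmidtReal

variable {V W κ : Type*} [NormedAddCommGroup V] [InnerProductSpace ℝ V]
  [NormedAddCommGroup W] [InnerProductSpace ℝ W]

theorem isHS_iff_hsENormSq_ne_top (e : HilbertBasis κ ℝ V) {X : V →L[ℝ] W} :
    IsHS e X ↔ hsENormSq e X ≠ ∞ :=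
  tsum_enorm_sq_ne_top_iff_summable.symm

theorem hsDistSq_eq_toReal_hsENormSq (e : HilbertBasis κ ℝ V) (X Y : V →L[ℝ] W) :
    hsDistSq e X Y = (hsENormSq e (X - Y)).toReal :=
  (toReal_tsum_enorm_sq _).symm

end HilbertSchmidtReal

section SpectralDecomposition

variable {V ι κ : Type*} [NormedAddCommGroup V] [InnerProductSpace ℝ V]
  {X Y : V →L[ℝ] V} {v w : HilbertBasis ι ℝ V} {l m : ι → ℝ}

/-- The operator `X` is diagonal in the Hilbert basis `v`, with eigenvalues `l` counted with
multiplicity; in the paper's notation, `l = λ(X)` and `X = ∑ᵢ lᵢ vᵢ ⊗ vᵢ`. -/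
def HasEigenbasis (X : V →L[ℝ] V) (v : HilbertBasis ι ℝ V) (l : ι → ℝ) : Prop :=
  ∀ i, X (v i) = l i • v i

namespace HasEigenbasis

theorem of_apply_eq_tsum (hX : ∀ x, X x = ∑' i, (l i * ⟪x, v i⟫_ℝ) • v i) :
    HasEigenbasis X v l := by
  intro i
  rw [hX, tsum_eq_single i]
  · simp [v.orthonormal.1 i]
  · intro j hj
    rw [v.orthonormal.2 hj.symm, mul_zero, zero_smul]

theorem sub (hX : HasEigenbasis X v l) (hY : HasEigenbasis Y v m) :
    HasEigenbasis (X - Y) v (l - m) := fun i => by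
  rw [sub_apply, hX, hY, ← sub_smul, Pi.sub_apply]

theorem hasSum (hX : HasEigenbasis X v l) (x : V) :
    HasSum (fun i => (l i * ⟪x, v i⟫_ℝ) • v i) (X x) := by
  refine ((v.hasSum_repr x).mapL X).congr_fun fun i => ?_
  rw [map_smul, hX, smul_smul, v.repr_apply_apply, real_inner_comm, mul_comm]

theorem apply_eq_tsum (hX : HasEigenbasis X v l) (x : V) :
    X x = ∑' i, (l i * ⟪x, v i⟫_ℝ) • v i :=
  (hX.hasSum x).tsum_eq.symm

theorem isSymmetric (hX : HasEigenbasis X v l) : (X : V →ₗ[ℝ] V).IsSymmetric := by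
  intro x y
  rw [real_inner_comm]
  refine ((hX.hasSum x).mapL (innerSL ℝ y)).unique
    (((hX.hasSum y).mapL (innerSL ℝ x)).congr_fun fun i => ?_)
  simp only [innerSL_apply_apply, inner_smul_right]
  ring

theorem inner_hilbertBasis_apply (hX : HasEigenbasis X v l) (i : ι) (x : V) :
    ⟪v i, X x⟫_ℝ = l i * ⟪v i, x⟫_ℝ := by
  rw [← real_inner_smul_left, ← hX]
  exact (hX.isSymmetric (v i) x).symm

variable [CompleteSpace V]

theorem hsENormSq_eq (hX : HasEigenbasis X v l) (e : HilbertBasis κ ℝ V) :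
    hsENormSq e X = ∑' i, ‖l i‖ₑ ^ 2 := by
  rw [hsENormSq_eq_of_hilbertBasis e v, hsENormSq]
  simp only [hX _, enorm_smul, ← ofReal_norm (v _), v.orthonormal.1, ENNReal.ofReal_one, mul_one]

theorem isHS_iff (hX : HasEigenbasis X v l) (e : HilbertBasis κ ℝ V) :
    IsHS e X ↔ Memℓp l 2 := by
  rw [isHS_iff_hsENormSq_ne_top, hX.hsENormSq_eq, memℓp_two_iff_tsum_enorm_sq_ne_top]

theorem hsDistSq_eq_norm_sub_sq {l m : ℓ²(ι, ℝ)} (hX : HasEigenbasis X v l)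
    (hY : HasEigenbasis Y v m) (e : HilbertBasis κ ℝ V) : hsDistSq e X Y = ‖l - m‖ ^ 2 := by
  rw [hsDistSq_eq_toReal_hsENormSq, (hX.sub hY).hsENormSq_eq, ← lp.coeFn_sub, tsum_enorm_sq_lp,
    ENNReal.toReal_pow, toReal_enorm]

theorem hsDistSq_eq_tsum (hX : HasEigenbasis X v l) (hY : HasEigenbasis Y w m)
    (e : HilbertBasis κ ℝ V) :
    hsDistSq e X Y = ∑' p : ι × ι, (l p.1 - m p.2) ^ 2 * ⟪v p.1, w p.2⟫_ℝ ^ 2 := by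
  rw [hsDistSq_eq_toReal_hsENormSq, hsENormSq_eq_of_hilbertBasis e w,
    hsENormSq_eq_tsum_enorm_inner_sq w v, toReal_tsum_enorm_sq]
  refine tsum_congr fun p => ?_
  rw [sub_apply, inner_sub_right, hX.inner_hilbertBasis_apply, hY, inner_smul_right, ← sub_mul,
    Real.norm_eq_abs, sq_abs, mul_pow]

end HasEigenbasis

theorem exists_hasEigenbasis_of_memℓp_top (v : HilbertBasis ι ℝ V) (hl : Memℓp l ∞) :
    ∃ X : V →L[ℝ] V, HasEigenbasis X v l := by
  classical
  let L : lp (fun _ : ι => ℝ) ∞ := ⟨l, hl⟩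
  let D : ℓ²(ι, ℝ) →L[ℝ] ℓ²(ι, ℝ) :=
    lp.mapCLM 2 (fun i => l i • ContinuousLinearMap.id ℝ ℝ) (norm_nonneg L) fun i => by
      simpa [norm_smul] using lp.norm_apply_le_norm ENNReal.top_ne_zero L i
  refine ⟨v.repr.symm.toContinuousLinearEquiv.toContinuousLinearMap ∘L D ∘L
    v.repr.toContinuousLinearEquiv.toContinuousLinearMap, fun i => v.repr.injective ?_⟩
  ext j
  obtain rfl | hij := eq_or_ne j i
  · simp [D]
  · simp [D, v.repr_apply_apply, v.orthonormal.2 hij]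

theorem exists_hasEigenbasis_of_isSymmetric [CompleteSpace V] (b : HilbertBasis ι ℝ V)
    (hc : IsCompactOperator X) (hX : (X : V →ₗ[ℝ] V).IsSymmetric) :
    ∃ (v : HilbertBasis ι ℝ V) (l : ι → ℝ), HasEigenbasis X v l := by
  let U (μ : ℝ) : Submodule ℝ V := Module.End.eigenspace (X : Module.End ℝ V) μ
  have hU (μ : ℝ) : CompleteSpace (U μ) :=
    (ContinuousLinearMap.isClosed_eigenspace X μ).completeSpace_coe
  choose s c _ using fun μ => exists_hilbertBasis ℝ (U μ)
  obtain ⟨u, hu⟩ := exists_hilbertBasis_sigma hX.orthogonalFamily_eigenspaces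
    (ContinuousLinearMap.orthogonalComplement_iSup_eigenspaces_eq_bot hc hX) c
  obtain ⟨φ⟩ := nonempty_equiv_of_hilbertBasis b u
  obtain ⟨v, hv⟩ := exists_hilbertBasis_reindex u φ
  refine ⟨v, fun i => (φ i).1, fun i => ?_⟩
  rw [hv, hu]
  exact Module.End.mem_eigenspace_iff.1 (c _ _).2

theorem exists_hasEigenbasis_of_isHS [CompleteSpace V] {e : HilbertBasis κ ℝ V}
    (b : HilbertBasis ι ℝ V) (hX : IsHS e X) (hsymm : (X : V →ₗ[ℝ] V).IsSymmetric) :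
    ∃ (v : HilbertBasis ι ℝ V) (l : ℓ²(ι, ℝ)), HasEigenbasis X v l := by
  obtain ⟨v, l, hl⟩ := exists_hasEigenbasis_of_isSymmetric b
    (isCompactOperator_of_hsENormSq_ne_top e ((isHS_iff_hsENormSq_ne_top e).1 hX)) hsymm
  exact ⟨v, ⟨l, (hl.isHS_iff e).1 hX⟩, hl⟩

end SpectralDecomposition

section FiniteRearrangement

variable {n : Type*} [Fintype n]

theorem exists_perm_sum_mul_le_of_mem_doublyStochastic [DecidableEq n] {M : Matrix n n ℝ}
    (hM : M ∈ doublyStochastic ℝ n) (x y : n → ℝ) :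
    ∃ σ : Equiv.Perm n, ∑ i, ∑ j, x i * y j * M i j ≤ ∑ i, x (σ i) * y i := by
  let φ : Matrix n n ℝ →ₗ[ℝ] ℝ := ∑ i, ∑ j, (x i * y j) • Matrix.entryLinearMap ℝ ℝ i j
  have hφ (A : Matrix n n ℝ) : φ A = ∑ i, ∑ j, x i * y j * A i j := by
    simp [φ, LinearMap.sum_apply]
  rw [← SetLike.mem_coe, doublyStochastic_eq_convexHull_permMatrix] at hM
  obtain ⟨_, ⟨σ, rfl⟩, hσ⟩ :=
    (φ.convexOn convex_univ).exists_ge_of_mem_convexHull (Set.subset_univ _) hM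
  refine ⟨σ.symm, ?_⟩
  calc ∑ i, ∑ j, x i * y j * M i j ≤ ∑ i, ∑ j, x i * y j * σ.permMatrix ℝ i j := by
        rwa [hφ, hφ] at hσ
    _ = ∑ i, x i * y (σ i) := by simp
    _ = ∑ i, x (σ.symm i) * y i := by
        rw [← Equiv.sum_comp σ fun i => x (σ.symm i) * y i]
        simp only [Equiv.symm_apply_apply]

theorem fromBlocks_mem_doublyStochastic [DecidableEq n] {A : Matrix n n ℝ}
    (hA : ∀ i j, 0 ≤ A i j) (hrow : ∀ i, ∑ j, A i j ≤ 1) (hcol : ∀ j, ∑ i, A i j ≤ 1) :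
    Matrix.fromBlocks A (.diagonal fun i => 1 - ∑ j, A i j) (.diagonal fun j => 1 - ∑ i, A i j)
      A.transpose ∈ doublyStochastic ℝ (n ⊕ n) := by
  rw [mem_doublyStochastic_iff_sum]
  refine ⟨?_, ?_, ?_⟩
  · rintro (i | i) (j | j) <;>
      simp only [Matrix.fromBlocks_apply₁₁, Matrix.fromBlocks_apply₁₂, Matrix.fromBlocks_apply₂₁,
        Matrix.fromBlocks_apply₂₂, Matrix.diagonal_apply, Matrix.transpose_apply]
    · exact hA i j
    · split_ifs <;> simp [hrow]
    · split_ifs <;> simp [hcol]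
    · exact hA j i
  · rintro (i | i) <;> simp [Matrix.diagonal_apply]
  · rintro (i | i) <;> simp [Matrix.diagonal_apply]

theorem exists_perm_sum_mul_le_of_substochastic {A : Matrix n n ℝ} (hA : ∀ i j, 0 ≤ A i j)
    (hrow : ∀ i, ∑ j, A i j ≤ 1) (hcol : ∀ j, ∑ i, A i j ≤ 1) (x y : n → ℝ) :
    ∃ σ : Equiv.Perm (n ⊕ n),
      ∑ i, ∑ j, x i * y j * A i j ≤ ∑ i, Sum.elim x 0 (σ (.inl i)) * y i := by
  classical
  simpa using exists_perm_sum_mul_le_of_mem_doublyStochastic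
    (fromBlocks_mem_doublyStochastic hA hrow hcol) (Sum.elim x 0) (Sum.elim y 0)

end FiniteRearrangement

theorem exists_embedding_sum_extend_finset {ι : Type*} [Infinite ι] (S : Finset ι) :
    ∃ φ : S ⊕ S ↪ ι, (∀ i, φ (.inl i) = i) ∧ ∀ i, φ (.inr i) ∉ S := by
  have : Infinite {i // i ∉ S} := S.finite_toSet.infinite_compl.to_subtype
  obtain ⟨g, hg⟩ := exists_injective_nat S
  let ψ : S ↪ {i // i ∉ S} := .trans ⟨g, hg⟩ (Infinite.natEmbedding _)
  refine ⟨⟨Sum.elim (↑) fun i => ψ i, ?_⟩, fun _ => rfl, fun i => (ψ i).2⟩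
  exact Subtype.val_injective.sumElim (Subtype.val_injective.comp ψ.injective)
    fun i j h => (ψ j).2 (h ▸ i.2)

section SequenceSpace

variable {ι κ : Type*}

/-- The isometry `x ↦ x ∘ φ` of `ℓ²` spaces induced by a bijection `φ` of the index sets. -/
def lpReindex (φ : ι ≃ κ) : ℓ²(κ, ℝ) →ₗᵢ[ℝ] ℓ²(ι, ℝ) where
  toFun x := ⟨fun i => x (φ i), memℓp_gen <|
    ((lp.memℓp x).summable (by norm_num)).comp_injective φ.injective⟩
  map_add' _ _ := rfl
  map_smul' _ _ := rfl
  norm_map' x := by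
    rw [lp.norm_eq_tsum_rpow (by norm_num), lp.norm_eq_tsum_rpow (by norm_num)]
    exact congrArg (· ^ _) (φ.tsum_eq fun i => ‖x i‖ ^ (2 : ℝ≥0∞).toReal)

@[simp]
theorem lpReindex_apply (φ : ι ≃ κ) (x : ℓ²(κ, ℝ)) (i : ι) : lpReindex φ x i = x (φ i) := rfl

open Classical in
/-- The sequence `x` with its entries outside `S` replaced by zero. -/
def lpTruncate (S : Finset ι) (x : ℓ²(ι, ℝ)) : ℓ²(ι, ℝ) := ∑ i ∈ S, lp.single 2 i (x i)

theorem lpTruncate_apply_of_mem {S : Finset ι} {i : ι} (hi : i ∈ S) (x : ℓ²(ι, ℝ)) :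
    lpTruncate S x i = x i := by
  simp only [lpTruncate, lp.coeFn_sum, lp.coeFn_single, Finset.sum_apply, Finset.sum_pi_single,
    if_pos hi]

theorem lpTruncate_apply_of_notMem {S : Finset ι} {i : ι} (hi : i ∉ S) (x : ℓ²(ι, ℝ)) :
    lpTruncate S x i = 0 := by
  simp only [lpTruncate, lp.coeFn_sum, lp.coeFn_single, Finset.sum_apply, Finset.sum_pi_single,
    if_neg hi]

theorem inner_lpTruncate (S : Finset ι) (x y : ℓ²(ι, ℝ)) :
    ⟪x, lpTruncate S y⟫_ℝ = ∑ i ∈ S, x i * y i := by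
  simp [lpTruncate, inner_sum, lp.inner_single_right, mul_comm]

theorem tendsto_lpTruncate (x : ℓ²(ι, ℝ)) : Tendsto (lpTruncate · x) atTop (𝓝 x) := by
  classical
  simpa only [lpTruncate, HasSum, SummationFilter.unconditional_filter] using
    lp.hasSum_single (by norm_num) x

end SequenceSpace

theorem inner_sub_inner_le {E : Type*} [NormedAddCommGroup E] [InnerProductSpace ℝ E]
    (x x' y y' : E) : ⟪x, y⟫_ℝ - ⟪x', y'⟫_ℝ ≤ ‖x - x'‖ * ‖y‖ + ‖x'‖ * ‖y - y'‖ := by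
  calc ⟪x, y⟫_ℝ - ⟪x', y'⟫_ℝ = ⟪x - x', y⟫_ℝ + ⟪x', y - y'⟫_ℝ := by
        rw [inner_sub_left, inner_sub_right]
        ring
    _ ≤ _ := add_le_add (real_inner_le_norm _ _) (real_inner_le_norm _ _)

section DoublyStochasticArrays

variable {ι κ : Type*}

/-- A doubly stochastic matrix whose rows and columns may be infinite. The squared inner products
of the vectors of two Hilbert bases form such an array. -/
structure IsDoublyStochasticArray (a : ι → κ → ℝ) : Prop where
  nonneg : ∀ i j, 0 ≤ a i j
  hasSum_row : ∀ i, HasSum (a i) 1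
  hasSum_col : ∀ j, HasSum (fun i => a i j) 1

theorem isDoublyStochasticArray_inner_sq {V : Type*} [NormedAddCommGroup V]
    [InnerProductSpace ℝ V] (v : HilbertBasis ι ℝ V) (w : HilbertBasis κ ℝ V) :
    IsDoublyStochasticArray fun i j => ⟪v i, w j⟫_ℝ ^ 2 where
  nonneg _ _ := sq_nonneg _
  hasSum_row i := by
    simpa [real_inner_comm, v.orthonormal.1] using hasSum_norm_sq_inner w (v i)
  hasSum_col j := by
    simpa [w.orthonormal.1] using hasSum_norm_sq_inner v (w j)

namespace IsDoublyStochasticArray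

variable {a : ι → κ → ℝ}

theorem swap (ha : IsDoublyStochasticArray a) : IsDoublyStochasticArray fun j i => a i j :=
  ⟨fun j i => ha.nonneg i j, ha.hasSum_col, ha.hasSum_row⟩

theorem hasSum_fst_mul (ha : IsDoublyStochasticArray a) {c : ι → ℝ} {C : ℝ}
    (hc : ∀ i, 0 ≤ c i) (hC : HasSum c C) :
    HasSum (fun p : ι × κ => c p.1 * a p.1 p.2) C := by
  have hrow (i : ι) : HasSum (fun j => c i * a i j) (c i) := by
    simpa only [mul_one] using (ha.hasSum_row i).mul_left (c i)
  have hsum : Summable fun p : ι × κ => c p.1 * a p.1 p.2 := by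
    refine (summable_prod_of_nonneg fun p => mul_nonneg (hc _) (ha.nonneg _ _)).2
      ⟨fun i => (hrow i).summable, ?_⟩
    simpa only [(hrow _).tsum_eq] using hC.summable
  exact hC.unique (hsum.hasSum.prod_fiberwise hrow) ▸ hsum.hasSum

theorem hasSum_fst_sq_mul (ha : IsDoublyStochasticArray a) (l : ℓ²(ι, ℝ)) :
    HasSum (fun p : ι × κ => l p.1 ^ 2 * a p.1 p.2) (‖l‖ ^ 2) :=
  ha.hasSum_fst_mul (c := fun i => l i ^ 2) (fun _ => sq_nonneg _)
    (by simpa using hasSum_norm_sq_lp l)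

theorem hasSum_snd_sq_mul (ha : IsDoublyStochasticArray a) (m : ℓ²(κ, ℝ)) :
    HasSum (fun p : ι × κ => m p.2 ^ 2 * a p.1 p.2) (‖m‖ ^ 2) :=
  (Equiv.prodComm ι κ).hasSum_iff.2 (ha.swap.hasSum_fst_sq_mul m)

theorem summable_mul_mul (ha : IsDoublyStochasticArray a) (l : ℓ²(ι, ℝ)) (m : ℓ²(κ, ℝ)) :
    Summable fun p : ι × κ => l p.1 * m p.2 * a p.1 p.2 := by
  refine .of_norm_bounded ((ha.hasSum_fst_sq_mul l).add (ha.hasSum_snd_sq_mul m)).summable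
    fun p => ?_
  have hlm : |l p.1 * m p.2| ≤ l p.1 ^ 2 + m p.2 ^ 2 := by
    rw [abs_le]
    constructor <;> nlinarith [sq_nonneg (l p.1 + m p.2), sq_nonneg (l p.1 - m p.2)]
  rw [Real.norm_eq_abs, abs_mul, abs_of_nonneg (ha.nonneg _ _), ← add_mul]
  exact mul_le_mul_of_nonneg_right hlm (ha.nonneg _ _)

theorem tsum_sub_sq_mul (ha : IsDoublyStochasticArray a) (l : ℓ²(ι, ℝ)) (m : ℓ²(κ, ℝ)) :
    ∑' p : ι × κ, (l p.1 - m p.2) ^ 2 * a p.1 p.2 =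
      ‖l‖ ^ 2 + ‖m‖ ^ 2 - 2 * ∑' p : ι × κ, l p.1 * m p.2 * a p.1 p.2 := by
  refine HasSum.tsum_eq ((((ha.hasSum_fst_sq_mul l).add (ha.hasSum_snd_sq_mul m)).sub
    ((ha.summable_mul_mul l m).hasSum.mul_left 2)).congr_fun fun p => ?_)
  ring

variable {a : ι → ι → ℝ}

theorem exists_perm_tsum_mul_le_inner [Finite ι] (ha : IsDoublyStochasticArray a)
    (l m : ℓ²(ι, ℝ)) :
    ∃ π : ι ≃ ι, ∑' p : ι × ι, l p.1 * m p.2 * a p.1 p.2 ≤ ⟪lpReindex π l, m⟫_ℝ := by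
  classical
  have := Fintype.ofFinite ι
  have hM : Matrix.of a ∈ doublyStochastic ℝ ι := mem_doublyStochastic_iff_sum.2
    ⟨ha.nonneg, fun i => (hasSum_fintype _).unique (ha.hasSum_row i),
      fun j => (hasSum_fintype _).unique (ha.hasSum_col j)⟩
  obtain ⟨σ, hσ⟩ := exists_perm_sum_mul_le_of_mem_doublyStochastic hM l m
  refine ⟨σ, ?_⟩
  simpa [tsum_fintype, Fintype.sum_prod_type, lp.inner_eq_tsum, mul_comm] using hσ

theorem exists_perm_sum_mul_le_inner_lpTruncate [Infinite ι] (ha : IsDoublyStochasticArray a)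
    (l m : ℓ²(ι, ℝ)) (S : Finset ι) :
    ∃ π : ι ≃ ι, ∑ i ∈ S, ∑ j ∈ S, l i * m j * a i j ≤
      ⟪lpReindex π (lpTruncate S l), lpTruncate S m⟫_ℝ := by
  classical
  obtain ⟨σ, hσ⟩ := exists_perm_sum_mul_le_of_substochastic (A := .of fun i j : S => a i j)
    (fun i j => ha.nonneg i j)
    (fun i => (Finset.sum_coe_sort S (a i)).trans_le
      (sum_le_hasSum S (fun _ _ => ha.nonneg _ _) (ha.hasSum_row i)))
    (fun j => (Finset.sum_coe_sort S (a · j)).trans_le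
      (sum_le_hasSum S (fun _ _ => ha.nonneg _ _) (ha.hasSum_col j)))
    (fun i => l i) (fun j => m j)
  obtain ⟨φ, hφl, hφr⟩ := exists_embedding_sum_extend_finset S
  have hl (p : S ⊕ S) : lpTruncate S l (φ p) = Sum.elim (fun i : S => l i) 0 p := by
    rcases p with i | i
    · rw [hφl, lpTruncate_apply_of_mem i.2, Sum.elim_inl]
    · rw [lpTruncate_apply_of_notMem (hφr i), Sum.elim_inr, Pi.zero_apply]
  have hπ (i : S) : σ.viaEmbedding φ i = φ (σ (.inl i)) := by
    rw [← σ.viaEmbedding_apply φ, hφl]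
  refine ⟨σ.viaEmbedding φ, ?_⟩
  rw [inner_lpTruncate, ← Finset.sum_coe_sort S, ← Finset.sum_coe_sort S]
  simpa only [Matrix.of_apply, lpReindex_apply, hπ, hl,
    ← Finset.sum_coe_sort S fun j => l _ * m j * a _ j] using hσ

theorem exists_perm_lt_inner_of_lt_tsum_mul (ha : IsDoublyStochasticArray a) (l m : ℓ²(ι, ℝ))
    {c : ℝ} (hc : c < ∑' p : ι × ι, l p.1 * m p.2 * a p.1 p.2) :
    ∃ π : ι ≃ ι, c < ⟪lpReindex π l, m⟫_ℝ := by
  cases finite_or_infinite ι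
  · obtain ⟨π, hπ⟩ := ha.exists_perm_tsum_mul_le_inner l m
    exact ⟨π, hc.trans_le hπ⟩
  have hsum : Tendsto (fun S : Finset ι => ∑ i ∈ S, ∑ j ∈ S, l i * m j * a i j) atTop
      (𝓝 (∑' p : ι × ι, l p.1 * m p.2 * a p.1 p.2)) := by
    simp_rw [← Finset.sum_product']
    exact (ha.summable_mul_mul l m).hasSum.comp
      (tendsto_finsetProd_atTop.comp tendsto_atTop_diagonal)
  have herr : Tendsto (fun S => ‖lpTruncate S l - l‖ * ‖lpTruncate S m‖ +
      ‖l‖ * ‖lpTruncate S m - m‖) atTop (𝓝 0) := by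
    have hl := (tendsto_lpTruncate l).sub_const l |>.norm.mul (tendsto_lpTruncate m).norm
    have hm := (tendsto_lpTruncate m).sub_const m |>.norm.const_mul ‖l‖
    simpa using hl.add hm
  obtain ⟨S, hS⟩ : ∃ S : Finset ι, c < ∑ i ∈ S, ∑ j ∈ S, l i * m j * a i j -
      (‖lpTruncate S l - l‖ * ‖lpTruncate S m‖ + ‖l‖ * ‖lpTruncate S m - m‖) :=
    ((hsum.sub herr).eventually_const_lt (by rwa [sub_zero])).exists
  obtain ⟨π, hπ⟩ := ha.exists_perm_sum_mul_le_inner_lpTruncate l m S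
  have hinner := inner_sub_inner_le (lpReindex π (lpTruncate S l)) (lpReindex π l)
    (lpTruncate S m) m
  rw [← map_sub, LinearIsometry.norm_map, LinearIsometry.norm_map] at hinner
  exact ⟨π, by linarith⟩

theorem exists_perm_mul_norm_sub_sq_lt (ha : IsDoublyStochasticArray a) (l m : ℓ²(ι, ℝ))
    {γ t : ℝ} (ht : γ * ∑' p : ι × ι, (l p.1 - m p.2) ^ 2 * a p.1 p.2 < t) :
    ∃ π : ι ≃ ι, γ * ‖lpReindex π l - m‖ ^ 2 < t := by
  have hc : (γ * (‖l‖ ^ 2 + ‖m‖ ^ 2) - t) / 2 <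
      ∑' p : ι × ι, (γ • l) p.1 * m p.2 * a p.1 p.2 := by
    simp only [lp.coeFn_smul, Pi.smul_apply, smul_eq_mul, mul_assoc γ, tsum_mul_left]
    rw [ha.tsum_sub_sq_mul] at ht
    linarith
  obtain ⟨π, hπ⟩ := ha.exists_perm_lt_inner_of_lt_tsum_mul (γ • l) m hc
  refine ⟨π, ?_⟩
  rw [map_smul, real_inner_smul_left] at hπ
  rw [norm_sub_sq_real, LinearIsometry.norm_map]
  linarith

end IsDoublyStochasticArray

end DoublyStochasticArrays

section Transform

variable {V ι κ : Type*} [NormedAddCommGroup V] [InnerProductSpace ℝ V] [CompleteSpace V]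

theorem exists_perm_mul_norm_sub_sq_lt_of_mul_hsDistSq_lt {X Y : V →L[ℝ] V}
    {v w : HilbertBasis ι ℝ V} {l m : ℓ²(ι, ℝ)} (hX : HasEigenbasis X v l)
    (hY : HasEigenbasis Y w m) (e : HilbertBasis κ ℝ V) {γ t : ℝ}
    (ht : γ * hsDistSq e X Y < t) : ∃ π : ι ≃ ι, γ * ‖lpReindex π l - m‖ ^ 2 < t := by
  rw [hX.hsDistSq_eq_tsum hY] at ht
  exact (isDoublyStochasticArray_inner_sq v w).exists_perm_mul_norm_sub_sq_lt l m ht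

theorem sub_coe_le_of_forall_lt {a s : EReal} {D : ℝ} (h : ∀ t : ℝ, D < t → a - t ≤ s) :
    a - D ≤ s := by
  have hneg : Continuous fun t : ℝ => -(t : EReal) := continuous_neg.comp continuous_coe_real_ereal
  have hlim : Tendsto (fun t : ℝ => a - (t : EReal)) (𝓝[>] D) (𝓝 (a - D)) :=
    (EReal.continuousAt_add (.inr (by simp [← EReal.coe_neg])) (.inr (by simp [← EReal.coe_neg]))
      |>.comp (continuous_const.prodMk hneg).continuousAt).tendsto.mono_left nhdsWithin_le_nhds
  exact le_of_tendsto hlim (eventually_nhdsWithin_of_forall h)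

theorem statement7_general (e : HilbertBasis κ ℝ V) (f : (ι → ℝ) → EReal)
    (hperm : ∀ (x : ι → ℝ) (π : ι ≃ ι), f (fun i => x (π i)) = f x)
    (F : (V →L[ℝ] V) → EReal)
    (hF : ∀ (X : V →L[ℝ] V) (l : ι → ℝ) (v : HilbertBasis ι ℝ V),
      (∀ x : V, X x = ∑' i, (l i * ⟪x, v i⟫_ℝ) • v i) → F X = f l)
    (γ : ℝ) (Y : V →L[ℝ] V) (lY : ℓ²(ι, ℝ)) (vY : HilbertBasis ι ℝ V)
    (hYdec : ∀ x : V, Y x = ∑' i, (lY i * ⟪x, vY i⟫_ℝ) • vY i) :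
    SHSsa e γ F Y = SgammaE γ (fun x : ℓ²(ι, ℝ) => f x) lY := by
  have hY : HasEigenbasis Y vY lY := .of_apply_eq_tsum hYdec
  refine le_antisymm (iSup_le fun ⟨X, hXHS, hXsymm⟩ => ?_) (iSup_le fun x => ?_)
  · obtain ⟨v, l, hX⟩ := exists_hasEigenbasis_of_isHS vY hXHS hXsymm
    refine sub_coe_le_of_forall_lt fun t ht => ?_
    obtain ⟨π, hπ⟩ := exists_perm_mul_norm_sub_sq_lt_of_mul_hsDistSq_lt hX hY e ht
    calc -F X - t ≤ -f (lpReindex π l) - ((γ / 2 * ‖lpReindex π l - lY‖ ^ 2 : ℝ) : EReal) := by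
          rw [hF X l v hX.apply_eq_tsum, ← hperm l π]
          exact EReal.sub_le_sub le_rfl (EReal.coe_le_coe hπ.le)
      _ ≤ SgammaE γ (fun x : ℓ²(ι, ℝ) => f x) lY := le_iSup_of_le (lpReindex π l) le_rfl
  · obtain ⟨X, hX⟩ := exists_hasEigenbasis_of_memℓp_top vY ((lp.memℓp x).of_exponent_ge le_top)
    change -f x - ((γ / 2 * ‖x - lY‖ ^ 2 : ℝ) : EReal) ≤ _
    rw [← hF X x vY hX.apply_eq_tsum, ← hX.hsDistSq_eq_norm_sub_sq hY e]
    exact le_iSup_of_le ⟨X, (hX.isHS_iff e).2 (lp.memℓp x), hX.isSymmetric⟩ le_rfl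

end Transform

/-- Let `f : ℝ^d → [0,∞]` (`d = dim V`, realized as `ℓ²` over the index type
of a Hilbert basis of `V`) be permutation invariant and let `F(X) = f(λ(X))` on the space
`𝐇(V)` of self-adjoint Hilbert–Schmidt operators (expressed by the hypothesis that `F X = f l`
for every spectral decomposition `X = Σ l_i v_i ⊗ v_i` in a Hilbert basis `v` of `V`).
Then `S_{𝐇(V),γ}(F)(Y) = S_{ℝ^d,γ}(f)(λ(Y))`. -/
theorem statement7 {V : Type*}
    [NormedAddCommGroup V] [InnerProductSpace ℝ V] [CompleteSpace V]
    {ι : Type*} [Countable ι]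
    {κ : Type*} (e : HilbertBasis κ ℝ V)
    (f : (ι → ℝ) → ℝ≥0∞)
    (hperm : ∀ (x : ι → ℝ) (π : ι ≃ ι), f (fun i => x (π i)) = f x)
    (F : (V →L[ℝ] V) → ℝ≥0∞)
    (hF : ∀ (X : V →L[ℝ] V) (l : ι → ℝ) (v : HilbertBasis ι ℝ V),
      (∀ x : V, X x = ∑' i, (l i * ⟪x, v i⟫_ℝ) • v i) → F X = f l)
    (γ : ℝ) (hγ : 0 < γ)
    (Y : V →L[ℝ] V) (hY : IsHS e Y) (hYsa : ∀ x y : V, ⟪Y x, y⟫_ℝ = ⟪x, Y y⟫_ℝ)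
    (lY : lp (fun _ : ι => ℝ) 2) (vY : HilbertBasis ι ℝ V)
    (hYdec : ∀ x : V, Y x = ∑' i, (lY i * ⟪x, vY i⟫_ℝ) • vY i) :
    SHSsa e γ (fun X => (F X : EReal)) Y =
      SgammaE γ (fun x : lp (fun _ : ι => ℝ) 2 => (f x : EReal)) lY := by
  exact statement7_general e (fun x => (f x : EReal)) (fun x π => congrArg _ (hperm x π))
    (fun X => (F X : EReal)) (fun X l v h => congrArg _ (hF X l v h)) γ Y lY vY hYdec
end
end

section
/- Fix μ > 0 and γ > 0, and let |x|₀ denote the function on ℝ which equals 0 at x = 0 and 1 for x ≠ 0. Then for all y, x ∈ ℝ: S_γ(μ|·|₀)(y) = −min{ γy²/2, μ } and S_γ²(μ|·|₀)(x) = μ − ( max{ √μ − √γ·|x|/√2, 0 } )². -/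
open scoped InnerProductSpace RealInnerProductSpace ENNReal Topology
open Filter

noncomputable section

/-!
In the first transform the supremum is attained either at `0`, where the penalty vanishes, or at
`y`, where the quadratic term vanishes. In the second, put `a = √μ`, `c = √(γ / 2)`,
`s = c * ‖y‖` and `r = c * ‖x‖`. By the reverse triangle inequality the objective
`min (s ^ 2) (a ^ 2) - (c * ‖y - x‖) ^ 2` is at most `min (s ^ 2) (a ^ 2) - (s - r) ^ 2`, with
equality when `y` is a nonnegative multiple of `x`. As a function of `s ≥ 0` this bound is
nondecreasing up to `s = max a r` and nonincreasing afterwards, so the maximum is attained at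
`y = x` if `a ≤ r`, and on the ray through `x` at `s = a` if
`0 < r ≤ a`. For `r = 0 ≤ a` the bound is constant on `[0, a]`, so `y = 0` is a maximizer.
-/

section Envelope

variable {V : Type*} {a c μ γ : ℝ}

theorem SgammaE_coe_eq_of_isGreatest [NormedAddCommGroup V] [InnerProductSpace ℝ V]
    {g : V → ℝ} {y : V} {s : ℝ}
    (h : IsGreatest (Set.range fun x => -g x - γ / 2 * ‖x - y‖ ^ 2) s) :
    SgammaE γ (fun x => (g x : EReal)) y = (s : EReal) := by
  have hcoe := EReal.coe_strictMono.monotone.map_isGreatest h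
  rw [← Set.range_comp] at hcoe
  simpa only [SgammaE, Function.comp_def, EReal.coe_sub, EReal.coe_neg] using hcoe.isLUB.iSup_eq

theorem isGreatest_range_neg_ite_sub_norm_sub_sq [SeminormedAddCommGroup V] [DecidableEq V]
    (hμ : 0 ≤ μ) (hγ : 0 ≤ γ) (y : V) :
    IsGreatest (Set.range fun x : V => -(if x = 0 then 0 else μ) - γ / 2 * ‖x - y‖ ^ 2)
      (-min (γ * ‖y‖ ^ 2 / 2) μ) := by
  constructor
  · rcases le_or_gt (γ * ‖y‖ ^ 2 / 2) μ with hle | hlt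
    · refine ⟨0, ?_⟩
      simp only [if_true, zero_sub, norm_neg, min_eq_left hle]
      ring
    · have hy : y ≠ 0 := by
        rintro rfl
        simp only [norm_zero] at hlt
        linarith
      exact ⟨y, by simp [hy, min_eq_right hlt.le]⟩
  · rintro _ ⟨x, rfl⟩
    dsimp only
    split_ifs with hx
    · rw [hx, zero_sub y, norm_neg]
      linarith [min_le_left (γ * ‖y‖ ^ 2 / 2) μ]
    · have hdist : 0 ≤ γ / 2 * ‖x - y‖ ^ 2 := by positivity
      linarith [min_le_right (γ * ‖y‖ ^ 2 / 2) μ]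

theorem Sgamma_ite_eq_zero [NormedAddCommGroup V] [InnerProductSpace ℝ V] [DecidableEq V]
    (hμ : 0 ≤ μ) (hγ : 0 ≤ γ) (y : V) :
    Sgamma γ (fun x : V => if x = 0 then 0 else ENNReal.ofReal μ) y =
      ((-min (γ * ‖y‖ ^ 2 / 2) μ : ℝ) : EReal) := by
  have hcoe (x : V) : ((if x = 0 then 0 else ENNReal.ofReal μ : ℝ≥0∞) : EReal) =
      ((if x = 0 then 0 else μ : ℝ) : EReal) := by
    split_ifs <;> simp [hμ]
  simp only [Sgamma, hcoe]
  exact SgammaE_coe_eq_of_isGreatest (isGreatest_range_neg_ite_sub_norm_sub_sq hμ hγ y)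

theorem min_sq_sub_sub_sq_le {r : ℝ} (hr : 0 ≤ r) (a s : ℝ) :
    min (s ^ 2) (a ^ 2) - (s - r) ^ 2 ≤ a ^ 2 - max (a - r) 0 ^ 2 := by
  rcases le_total a r with har | hra
  · rw [max_eq_right (sub_nonpos.2 har)]
    linarith [min_le_right (s ^ 2) (a ^ 2), sq_nonneg (s - r)]
  · rw [max_eq_left (sub_nonneg.2 hra)]
    rcases le_total s a with hsa | has
    · have hmul : s * r ≤ a * r := by gcongr
      linarith [min_le_left (s ^ 2) (a ^ 2)]
    · have hsq : (a - r) ^ 2 ≤ (s - r) ^ 2 :=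
        pow_le_pow_left₀ (sub_nonneg.2 hra) (by gcongr) 2
      linarith [min_le_right (s ^ 2) (a ^ 2)]

theorem min_sq_norm_sub_sq_norm_sub_le [SeminormedAddCommGroup V] (hc : 0 ≤ c) (a : ℝ)
    (x y : V) :
    min ((c * ‖y‖) ^ 2) (a ^ 2) - (c * ‖y - x‖) ^ 2 ≤ a ^ 2 - max (a - c * ‖x‖) 0 ^ 2 := by
  have hdist : (c * ‖y‖ - c * ‖x‖) ^ 2 ≤ (c * ‖y - x‖) ^ 2 := by
    rw [← mul_sub, mul_pow, mul_pow]
    gcongr ?_ * ?_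
    exact sq_le_sq.2 <| (abs_norm_sub_norm_le y x).trans_eq (abs_norm _).symm
  linarith [min_sq_sub_sub_sq_le (mul_nonneg hc (norm_nonneg x)) a (c * ‖y‖)]

theorem exists_min_sq_norm_sub_sq_norm_sub_eq [SeminormedAddCommGroup V] [NormedSpace ℝ V]
    (ha : 0 ≤ a) (hc : 0 ≤ c) (x : V) :
    ∃ y : V, min ((c * ‖y‖) ^ 2) (a ^ 2) - (c * ‖y - x‖) ^ 2 =
      a ^ 2 - max (a - c * ‖x‖) 0 ^ 2 := by
  rcases le_total a (c * ‖x‖) with hax | hxa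
  · refine ⟨x, ?_⟩
    have hsq : a ^ 2 ≤ (c * ‖x‖) ^ 2 := pow_le_pow_left₀ ha hax 2
    simp [max_eq_right (sub_nonpos.2 hax), min_eq_right hsq]
  · rw [max_eq_left (sub_nonneg.2 hxa)]
    rcases (mul_nonneg hc (norm_nonneg x)).eq_or_lt with hx | hx
    · exact ⟨0, by simp [← hx, sq_nonneg]⟩
    · set t := a / (c * ‖x‖)
      have ht_one : 1 ≤ t := (one_le_div₀ hx).2 hxa
      have htx : t * (c * ‖x‖) = a := div_mul_cancel₀ a hx.ne'
      have hnorm : c * ‖t • x‖ = a := by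
        rw [norm_smul_of_nonneg (by positivity), mul_left_comm, htx]
      have hdist : c * ‖t • x - x‖ = a - c * ‖x‖ := by
        have hsmul : t • x - x = (t - 1) • x := by rw [sub_smul, one_smul]
        rw [hsmul, norm_smul_of_nonneg (sub_nonneg.2 ht_one), mul_left_comm, sub_mul, htx, one_mul]
      exact ⟨t • x, by rw [hnorm, hdist, min_self]⟩

theorem isGreatest_range_min_sub_norm_sub_sq [SeminormedAddCommGroup V] [NormedSpace ℝ V]
    (hμ : 0 ≤ μ) (hγ : 0 ≤ γ) (x : V) :
    IsGreatest (Set.range fun y : V => min (γ * ‖y‖ ^ 2 / 2) μ - γ / 2 * ‖y - x‖ ^ 2)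
      (μ - max (√μ - √γ * ‖x‖ / √2) 0 ^ 2) := by
  have hscale : √γ * ‖x‖ / √2 = √(γ / 2) * ‖x‖ := by
    rw [Real.sqrt_div hγ, mul_div_right_comm]
  have hsq (z : V) : γ / 2 * ‖z‖ ^ 2 = (√(γ / 2) * ‖z‖) ^ 2 := by
    rw [mul_pow, Real.sq_sqrt (by positivity)]
  have hfun (y : V) : min (γ * ‖y‖ ^ 2 / 2) μ - γ / 2 * ‖y - x‖ ^ 2 =
      min ((√(γ / 2) * ‖y‖) ^ 2) (√μ ^ 2) - (√(γ / 2) * ‖y - x‖) ^ 2 := by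
    rw [mul_div_right_comm, hsq, hsq, Real.sq_sqrt hμ]
  have hvalue : μ - max (√μ - √γ * ‖x‖ / √2) 0 ^ 2 =
      √μ ^ 2 - max (√μ - √(γ / 2) * ‖x‖) 0 ^ 2 := by
    rw [hscale, Real.sq_sqrt hμ]
  simp only [hfun, hvalue]
  refine ⟨exists_min_sq_norm_sub_sq_norm_sub_eq (Real.sqrt_nonneg _) (Real.sqrt_nonneg _) x, ?_⟩
  rintro _ ⟨y, rfl⟩
  exact min_sq_norm_sub_sq_norm_sub_le (Real.sqrt_nonneg _) _ x y

theorem Sgamma2_ite_eq_zero [NormedAddCommGroup V] [InnerProductSpace ℝ V] [DecidableEq V]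
    (hμ : 0 ≤ μ) (hγ : 0 ≤ γ) (x : V) :
    Sgamma2 γ (fun x : V => if x = 0 then 0 else ENNReal.ofReal μ) x =
      ((μ - max (√μ - √γ * ‖x‖ / √2) 0 ^ 2 : ℝ) : EReal) := by
  simp only [Sgamma2, funext (Sgamma_ite_eq_zero hμ hγ)]
  apply SgammaE_coe_eq_of_isGreatest
  simpa only [neg_neg] using isGreatest_range_min_sub_norm_sub_sq hμ hγ x

end Envelope

theorem statement8_general {V : Type*} [NormedAddCommGroup V] [InnerProductSpace ℝ V]
    [DecidableEq V] {μ γ : ℝ} (hμ : 0 ≤ μ) (hγ : 0 ≤ γ) :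
    (∀ y : V, Sgamma γ (fun x : V => if x = 0 then 0 else ENNReal.ofReal μ) y =
      ((-min (γ * ‖y‖ ^ 2 / 2) μ : ℝ) : EReal)) ∧
    (∀ x : V, Sgamma2 γ (fun x : V => if x = 0 then 0 else ENNReal.ofReal μ) x =
      ((μ - max (√μ - √γ * ‖x‖ / √2) 0 ^ 2 : ℝ) : EReal)) :=
  ⟨Sgamma_ite_eq_zero hμ hγ, Sgamma2_ite_eq_zero hμ hγ⟩

/-- For `μ, γ > 0` and `|·|₀` the function on `ℝ` equal to `0` at `0` and `1`
elsewhere: `S_γ(μ|·|₀)(y) = -min(γy²/2, μ)` and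
`S_γ²(μ|·|₀)(x) = μ - (max(√μ - √γ·|x|/√2, 0))²`. -/
theorem statement8 (μ γ : ℝ) (hμ : 0 < μ) (hγ : 0 < γ) :
    (∀ y : ℝ, Sgamma γ (fun x : ℝ => if x = 0 then 0 else ENNReal.ofReal μ) y =
      ((-(min (γ * y ^ 2 / 2) μ) : ℝ) : EReal)) ∧
    (∀ x : ℝ, Sgamma2 γ (fun x : ℝ => if x = 0 then 0 else ENNReal.ofReal μ) x =
      ((μ - (max (Real.sqrt μ - Real.sqrt γ * |x| / Real.sqrt 2) 0) ^ 2 : ℝ) : EReal)) := by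
  simpa only [Real.norm_eq_abs, sq_abs] using statement8_general (V := ℝ) hμ.le hγ.le
end
end

section
/- Let f be a weakly lower semicontinuous [0,∞]-valued function on a separable real Hilbert space V, let γ > 0, and let x₀ ∈ V be a point with f(x₀) > S_γ²(f)(x₀). Then there exist a unit vector ν ∈ V, a real number a, and t₀ > 0 such that S_γ²(f)(x₀ + tν) = S_γ²(f)(x₀) + a·t − (γ/2)t² for all t ∈ (−t₀,t₀); in particular, t ↦ S_γ²(f)(x₀ + tν) has second derivative equal to −γ on (−t₀,t₀). -/
open scoped InnerProductSpace RealInnerProductSpace ENNReal Topology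
open Filter

noncomputable section

/-!
Adding `(γ / 2) ‖·‖²` turns `S_γ²` into a closed convex hull: the epigraph `T` of
`S_γ²(f) + (γ / 2) ‖·‖²` is the weakly closed convex hull of the epigraph `E` of
`f + (γ / 2) ‖·‖²`, because the paraboloids of curvature `-γ` below `f` become the affine minorants
of `E`. Weak lower semicontinuity makes `E` weakly closed, and `f ≥ 0` makes `T` locally weakly
compact, so Milman's theorem places every extreme point of `T` in `E`. The hypothesis
`S_γ²(f)(x₀) < f(x₀)` says that the lowest point of `T` above `x₀` is not in `E`. Hence it is the
midpoint of a segment in `T`, along which the lower boundary of `T` is affine; subtracting the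
paraboloid again gives the concave parabola.
-/

section Milman

variable {X : Type*} [AddCommGroup X] [Module ℝ X] [TopologicalSpace X] [IsTopologicalAddGroup X]
  [ContinuousSMul ℝ X]

lemma isCompact_convexJoin {s t : Set X} (hs : IsCompact s) (ht : IsCompact t) :
    IsCompact (convexJoin ℝ s t) := by
  have himage : convexJoin ℝ s t = (fun q : (X × X) × ℝ => AffineMap.lineMap q.1.1 q.1.2 q.2) ''
      ((s ×ˢ t) ×ˢ Set.Icc (0 : ℝ) 1) := by
    ext x
    simp only [mem_convexJoin, segment_eq_image_lineMap, Set.mem_image, Set.mem_prod, Prod.exists]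
    grind
  rw [himage]
  refine ((hs.prod ht).prod isCompact_Icc).image ?_
  simp only [AffineMap.lineMap_apply_module]
  fun_prop

lemma isCompact_convexHull_union {s t : Set X} (hs : IsCompact s) (ht : IsCompact t)
    (hs' : Convex ℝ s) (ht' : Convex ℝ t) : IsCompact (convexHull ℝ (s ∪ t)) := by
  rcases s.eq_empty_or_nonempty with rfl | hsne
  · rwa [Set.empty_union, ht'.convexHull_eq]
  rcases t.eq_empty_or_nonempty with rfl | htne
  · rwa [Set.union_empty, hs'.convexHull_eq]
  rw [hs'.convexHull_union ht' hsne htne]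
  exact isCompact_convexJoin hs ht

variable [LocallyConvexSpace ℝ X]

lemma exists_isClosed_convex_mem_nhds_subset {x : X} {u : Set X} (hu : u ∈ 𝓝 x) :
    ∃ w ∈ 𝓝 x, IsClosed w ∧ Convex ℝ w ∧ w ⊆ u := by
  obtain ⟨c, ⟨hc, hcclosed⟩, hcu⟩ := (closed_nhds_basis x).mem_iff.1 hu
  obtain ⟨v, ⟨hv, hvconvex⟩, hvc⟩ := (LocallyConvexSpace.convex_basis (𝕜 := ℝ) x).mem_iff.1 hc
  exact ⟨closure v, mem_of_superset hv subset_closure, isClosed_closure, hvconvex.closure,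
    (closure_minimal hvc hcclosed).trans hcu⟩

variable [T2Space X]

/-- The convex set `K \ {p}` contains the convex hull of any finite union of compact convex sets
covering `C`. -/
lemma exists_isCompact_convex_superset_of_mem_extremePoints {K C : Set X} {p : X} (hK : IsCompact K)
    (hp : p ∈ K.extremePoints ℝ) (hKconvex : Convex ℝ K) (hC : IsCompact C) (hCK : C ⊆ K \ {p}) :
    ∃ Q, IsCompact Q ∧ Convex ℝ Q ∧ C ⊆ Q ∧ Q ⊆ K \ {p} := by
  have hKp : Convex ℝ (K \ {p}) := (hKconvex.mem_extremePoints_iff_convex_sdiff.1 hp).2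
  refine hC.induction_on (p := fun s => ∃ Q, IsCompact Q ∧ Convex ℝ Q ∧ s ⊆ Q ∧ Q ⊆ K \ {p})
    ⟨∅, isCompact_empty, convex_empty, subset_rfl, Set.empty_subset _⟩ ?_ ?_ ?_
  · rintro s t hst ⟨Q, hQ, hQconvex, htQ, hQK⟩
    exact ⟨Q, hQ, hQconvex, hst.trans htQ, hQK⟩
  · rintro s t ⟨Q, hQ, hQconvex, hsQ, hQK⟩ ⟨R, hR, hRconvex, htR, hRK⟩
    exact ⟨convexHull ℝ (Q ∪ R), isCompact_convexHull_union hQ hR hQconvex hRconvex,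
      convex_convexHull ℝ _, (Set.union_subset_union hsQ htR).trans (subset_convexHull ℝ _),
      convexHull_min (Set.union_subset hQK hRK) hKp⟩
  · intro x hx
    obtain ⟨w, hw, hwclosed, hwconvex, hwp⟩ :=
      exists_isClosed_convex_mem_nhds_subset (isOpen_compl_singleton.mem_nhds (hCK hx).2)
    exact ⟨C ∩ w, inter_mem_nhdsWithin C hw, K ∩ w, hK.inter_right hwclosed,
      hKconvex.inter hwconvex, Set.inter_subset_inter_left w fun y hy => (hCK hy).1,
      fun y hy => ⟨hy.1, hwp hy.2⟩⟩

/-- Choquet's lemma. A slice of `T` is connected, so one that contains `p` cannot leave a small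
neighbourhood of `p` without meeting a compact part of `T` that `φ` separates from `p`. -/
lemma exists_slice_subset_of_mem_extremePoints {T C u : Set X} {p : X} (hT : Convex ℝ T)
    (hTclosed : IsClosed T) (hp : p ∈ T.extremePoints ℝ) (hC : IsCompact C) (hCT : C ∈ 𝓝[T] p)
    (hu : u ∈ 𝓝 p) :
    ∃ (φ : StrongDual ℝ X) (r : ℝ), φ p < r ∧ T ∩ {x | φ x < r} ⊆ u := by
  obtain ⟨v, hv, hvC⟩ := mem_nhdsWithin_iff_exists_mem_nhds_inter.1 hCT
  obtain ⟨w, hw, hwclosed, hwconvex, hwv⟩ := exists_isClosed_convex_mem_nhds_subset hv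
  have hKconvex : Convex ℝ (T ∩ w) := hT.inter hwconvex
  have hK : IsCompact (T ∩ w) := hC.of_isClosed_subset (hTclosed.inter hwclosed)
    fun x hx => hvC ⟨hwv hx.2, hx.1⟩
  have hpK : p ∈ (T ∩ w).extremePoints ℝ :=
    inter_extremePoints_subset_extremePoints_of_subset Set.inter_subset_left
      ⟨⟨hp.1, mem_of_mem_nhds hw⟩, hp⟩
  have hpN : p ∈ interior (u ∩ w) := mem_interior_iff_mem_nhds.2 (inter_mem hu hw)
  obtain ⟨Q, hQ, hQconvex, hKQ, hQp⟩ := exists_isCompact_convex_superset_of_mem_extremePoints hK hpK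
    hKconvex (hK.diff isOpen_interior)
    (Set.sdiff_subset_sdiff_right (Set.singleton_subset_iff.2 hpN))
  obtain ⟨φ, r, hφp, hφQ⟩ := geometric_hahn_banach_point_closed hQconvex hQ.isClosed
    fun hpQ => (hQp hpQ).2 rfl
  refine ⟨φ, r, hφp, ?_⟩
  have hslice : IsPreconnected (T ∩ {x | φ x < r}) :=
    (hT.inter (convex_halfSpace_lt φ.isLinear r)).isPreconnected
  have hcover : T ∩ {x | φ x < r} ⊆ interior (u ∩ w) ∪ wᶜ := by
    rintro x ⟨hxT, hxr⟩
    by_contra hx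
    rw [Set.mem_union, Set.mem_compl_iff, not_or, not_not] at hx
    exact (hφQ x (hKQ ⟨⟨hxT, hx.2⟩, hx.1⟩)).not_gt hxr
  have hdisjoint : Disjoint (interior (u ∩ w)) wᶜ :=
    Set.disjoint_compl_right_iff_subset.2 (interior_subset.trans Set.inter_subset_right)
  exact (hslice.subset_left_of_subset_union isOpen_interior hwclosed.isOpen_compl hdisjoint hcover
    ⟨p, ⟨hp.1, hφp⟩, hpN⟩).trans (interior_subset.trans Set.inter_subset_left)

/-- Milman's partial converse to the Krein–Milman theorem, with compactness only near `p`. -/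
theorem mem_of_mem_extremePoints_closedConvexHull {E C : Set X} {p : X} (hE : IsClosed E)
    (hp : p ∈ (closedConvexHull ℝ E).extremePoints ℝ) (hC : IsCompact C)
    (hCE : C ∈ 𝓝[closedConvexHull ℝ E] p) : p ∈ E := by
  by_contra hpE
  obtain ⟨φ, r, hφp, hslice⟩ := exists_slice_subset_of_mem_extremePoints convex_closedConvexHull
    isClosed_closedConvexHull hp hC hCE (hE.isOpen_compl.mem_nhds hpE)
  have hE_halfSpace : E ⊆ {x | r ≤ φ x} := fun x hx => by
    by_contra hx_lt
    have hxr : φ x < r := not_le.1 hx_lt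
    exact hslice ⟨subset_closedConvexHull hx, hxr⟩ hx
  exact (closedConvexHull_min hE_halfSpace (convex_halfSpace_ge φ.isLinear r)
    (isClosed_le continuous_const φ.continuous) hp.1).not_gt hφp

end Milman

section ConvexSetsInProductWithReal

variable {X : Type*} [AddCommGroup X] [Module ℝ X]

lemma exists_ne_zero_add_mem_sub_mem_of_notMem_extremePoints {T : Set X} {p : X}
    (hT : Convex ℝ T) (hpT : p ∈ T) (hp : p ∉ T.extremePoints ℝ) :
    ∃ d ≠ 0, p + d ∈ T ∧ p - d ∈ T := by
  rw [mem_extremePoints] at hp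
  push Not at hp
  obtain ⟨x, hx, y, hy, ⟨k, l, hk, hl, hkl, rfl⟩, hne⟩ := hp hpT
  have hxy : x ≠ y := by
    rintro rfl
    rw [Convex.combo_self hkl] at hne
    exact hne rfl rfl
  have hmin : 0 < min k l := lt_min hk hl
  refine ⟨min k l • (x - y), smul_ne_zero hmin.ne' (sub_ne_zero.2 hxy), ?_, ?_⟩
  · have hl' : 0 ≤ l - min k l := sub_nonneg.2 (min_le_right k l)
    convert hT hx hy (a := k + min k l) (b := l - min k l) (by positivity) hl' (by linarith) using 1
    module
  · have hk' : 0 ≤ k - min k l := sub_nonneg.2 (min_le_left k l)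
    convert hT hx hy (a := k - min k l) (b := l + min k l) hk' (by positivity) (by linarith) using 1
    module

lemma exists_direction_forall_mem_iff_of_notMem_extremePoints {T : Set (X × ℝ)} {x : X} {m : ℝ}
    (hT : Convex ℝ T) (hup : ∀ ⦃y s t⦄, (y, s) ∈ T → s ≤ t → (y, t) ∈ T)
    (hm : ∀ s, (x, s) ∈ T ↔ m ≤ s) (hext : (x, m) ∉ T.extremePoints ℝ) :
    ∃ (ν : X) (a : ℝ), ν ≠ 0 ∧
      ∀ t ∈ Set.Icc (-1 : ℝ) 1, ∀ s, (x + t • ν, s) ∈ T ↔ m + a * t ≤ s := by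
  obtain ⟨⟨ν, a⟩, hne, hadd, hsub⟩ :=
    exists_ne_zero_add_mem_sub_mem_of_notMem_extremePoints hT ((hm m).2 le_rfl) hext
  simp only [Prod.mk_add_mk, Prod.mk_sub_mk] at hadd hsub
  have hsegment : ∀ t ∈ Set.Icc (-1 : ℝ) 1, (x + t • ν, m + a * t) ∈ T := by
    intro t ⟨ht, ht'⟩
    convert hT hadd hsub (a := (1 + t) / 2) (b := (1 - t) / 2) (by linarith) (by linarith)
      (by ring) using 1
    ext1
    · simp only [Prod.fst_add, Prod.smul_fst]
      module
    · simp only [Prod.snd_add, Prod.smul_snd, smul_eq_mul]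
      ring
  refine ⟨ν, a, ?_, fun t ht s => ⟨fun hs => ?_, hup (hsegment t ht)⟩⟩
  · rintro rfl
    rw [add_zero, hm] at hadd
    rw [sub_zero, hm] at hsub
    exact hne (Prod.mk_eq_zero.2 ⟨rfl, by linarith⟩)
  · have hreflected := hsegment (-t) ⟨by linarith [ht.2], by linarith [ht.1]⟩
    have hmid := hT hs hreflected (a := 1 / 2) (b := 1 / 2) (by norm_num) (by norm_num)
      (by norm_num)
    have hfst : (1 / 2 : ℝ) • (x + t • ν) + (1 / 2 : ℝ) • (x + -t • ν) = x := by module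
    rw [Prod.smul_mk, Prod.smul_mk, Prod.mk_add_mk, hfst, hm, smul_eq_mul, smul_eq_mul] at hmid
    linarith

variable [TopologicalSpace X]

lemma exists_strongDual_prod_real_eq (φ : StrongDual ℝ (X × ℝ)) :
    ∃ (ψ : StrongDual ℝ X) (κ : ℝ), ∀ x s, φ (x, s) = ψ x + κ * s := by
  refine ⟨φ.comp (.inl ℝ X ℝ), φ (0, 1), fun x s => ?_⟩
  have hdecomp : (x, s) = (x, 0) + s • ((0 : X), (1 : ℝ)) := by simp
  rw [hdecomp, map_add, map_smul, smul_eq_mul, mul_comm s]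
  rfl

variable [IsTopologicalAddGroup X] [ContinuousSMul ℝ X] [LocallyConvexSpace ℝ X]

/-- The separating functional may be vertical; adding a large multiple of it to the minorant `φ₀`
then does the job. -/
lemma exists_affine_minorant_gt_of_notMem_closedConvexHull {E : Set (X × ℝ)} {x : X} {s : ℝ}
    (hup : ∀ ⦃y r t⦄, (y, r) ∈ E → r ≤ t → (y, t) ∈ E) {φ₀ : StrongDual ℝ X} {b₀ : ℝ}
    (hminorant : ∀ e ∈ E, b₀ + φ₀ e.1 ≤ e.2) (hx : (x, s) ∉ closedConvexHull ℝ E) :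
    ∃ (φ : StrongDual ℝ X) (b : ℝ), (∀ e ∈ E, b + φ e.1 ≤ e.2) ∧ s < b + φ x := by
  obtain ⟨Φ, r, hΦx, hΦE⟩ := geometric_hahn_banach_point_closed convex_closedConvexHull
    isClosed_closedConvexHull hx
  obtain ⟨ψ, κ, hΦ⟩ := exists_strongDual_prod_real_eq Φ
  replace hΦE : ∀ e ∈ E, r < ψ e.1 + κ * e.2 := fun e he =>
    hΦ e.1 e.2 ▸ hΦE e (subset_closedConvexHull he)
  rw [hΦ] at hΦx
  rcases E.eq_empty_or_nonempty with rfl | ⟨⟨y, t⟩, hyt⟩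
  · exact ⟨0, s + 1, by simp, by simp⟩
  rcases lt_trichotomy κ 0 with hκ | rfl | hκ
  · have hgap : r < ψ y + κ * t := hΦE _ hyt
    have hlift : r < ψ y + κ * (t + (ψ y + κ * t - r) / -κ) := hΦE (y, t + (ψ y + κ * t - r) / -κ)
      (hup hyt (le_add_of_nonneg_right (div_nonneg (by linarith) (by linarith))))
    -- `hlift` is `hΦE` at a point of `E` above `(y, t)` where `ψ + κ * ·` takes the value `r`.
    have hcancel : κ * ((ψ y + κ * t - r) / -κ) = -(ψ y + κ * t - r) := by
      rw [div_neg, mul_neg, mul_div_cancel₀ _ hκ.ne]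
    linarith
  · obtain ⟨N, hN⟩ := exists_nat_gt ((s - (b₀ + φ₀ x)) / (r - ψ x))
    refine ⟨φ₀ - (N : ℝ) • ψ, b₀ + N * r, fun e he => ?_, ?_⟩
    · have hN_mul : (N : ℝ) * r ≤ N * ψ e.1 :=
        mul_le_mul_of_nonneg_left (by linarith [hΦE e he]) N.cast_nonneg
      simp only [sub_apply, smul_apply, smul_eq_mul]
      linarith [hminorant e he]
    · rw [div_lt_iff₀ (by linarith)] at hN
      simp only [sub_apply, smul_apply, smul_eq_mul]
      linarith
  · refine ⟨-(κ⁻¹ • ψ), κ⁻¹ * r, fun e he => ?_, ?_⟩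
    · have := hΦE e he
      simp only [neg_apply, smul_apply, smul_eq_mul]
      rw [← sub_eq_add_neg, ← mul_sub, inv_mul_le_iff₀ hκ]
      linarith
    · simp only [neg_apply, smul_apply, smul_eq_mul]
      rw [← sub_eq_add_neg, ← mul_sub, lt_inv_mul_iff₀ hκ]
      linarith

lemma mem_closedConvexHull_iff_forall_affine_minorant {E : Set (X × ℝ)} {x : X} {s : ℝ}
    (hup : ∀ ⦃y r t⦄, (y, r) ∈ E → r ≤ t → (y, t) ∈ E) {φ₀ : StrongDual ℝ X} {b₀ : ℝ}
    (hminorant : ∀ e ∈ E, b₀ + φ₀ e.1 ≤ e.2) :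
    (x, s) ∈ closedConvexHull ℝ E ↔
      ∀ (φ : StrongDual ℝ X) (b : ℝ), (∀ e ∈ E, b + φ e.1 ≤ e.2) → b + φ x ≤ s := by
  refine ⟨fun hx φ b hφ => ?_, fun h => ?_⟩
  · have hconvex : Convex ℝ {e : X × ℝ | b + φ e.1 ≤ e.2} := by
      have := convex_halfSpace_le (φ.comp (.fst ℝ X ℝ) - .snd ℝ X ℝ).isLinear (-b)
      simpa [le_sub_iff_add_le] using this
    have hclosed : IsClosed {e : X × ℝ | b + φ e.1 ≤ e.2} :=
      isClosed_le (by fun_prop) (by fun_prop)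
    exact closedConvexHull_min hφ hconvex hclosed hx
  · by_contra hx
    obtain ⟨φ, b, hφ, hlt⟩ := exists_affine_minorant_gt_of_notMem_closedConvexHull hup hminorant hx
    exact (h φ b hφ).not_gt hlt

end ConvexSetsInProductWithReal

section WeakTopology

instance {X : Type*} [AddCommGroup X] [Module ℝ X] [TopologicalSpace X] :
    LocallyConvexSpace ℝ (WeakSpace ℝ X) :=
  WeakBilin.locallyConvexSpace (𝕜 := ℝ)

variable {V : Type*} [NormedAddCommGroup V] [InnerProductSpace ℝ V]

lemma exists_strongDual_weakSpace_eq_inner (v : V) :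
    ∃ φ : StrongDual ℝ (WeakSpace ℝ V), ∀ x, φ x = ⟪v, (toWeakSpace ℝ V).symm x⟫ :=
  ⟨⟨(innerSL ℝ v).toLinearMap.comp (toWeakSpace ℝ V).symm.toLinearMap,
    WeakBilin.eval_continuous (topDualPairing ℝ V).flip (innerSL ℝ v)⟩, fun _ => rfl⟩

variable [CompleteSpace V]

lemma exists_inner_eq_strongDual_weakSpace (φ : StrongDual ℝ (WeakSpace ℝ V)) :
    ∃ v : V, ∀ x, φ x = ⟪v, (toWeakSpace ℝ V).symm x⟫ :=
  ⟨(InnerProductSpace.toDual ℝ V).symm (φ.comp (toWeakSpaceCLM ℝ V)), fun x => by simp⟩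

/-- Under the Riesz isometry the weak-* topology of the dual is the weak topology of `V`, so this is
the Banach–Alaoglu theorem. -/
lemma isCompact_toWeakSpace_closedBall (r : ℝ) :
    IsCompact (toWeakSpace ℝ V '' Metric.closedBall 0 r) := by
  let riesz := (InnerProductSpace.toDual ℝ V).symm
  have hriesz : Continuous (toWeakSpace ℝ V ∘ riesz ∘ WeakDual.toStrongDual) := by
    refine WeakBilin.continuous_of_continuous_eval (topDualPairing ℝ V).flip fun φ => ?_
    convert WeakDual.eval_continuous (riesz φ) using 2 with ψ
    calc φ (riesz (WeakDual.toStrongDual ψ))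
        = ⟪riesz φ, riesz (WeakDual.toStrongDual ψ)⟫ := InnerProductSpace.toDual_symm_apply.symm
      _ = ⟪riesz (WeakDual.toStrongDual ψ), riesz φ⟫ := real_inner_comm _ _
      _ = ψ (riesz φ) := InnerProductSpace.toDual_symm_apply
  convert (WeakDual.isCompact_closedBall (𝕜 := ℝ) (E := V) 0 r).image hriesz using 1
  rw [Set.image_comp, Set.image_comp,
    Set.image_preimage_eq _ WeakDual.toStrongDual.surjective, riesz.image_closedBall, map_zero]

end WeakTopology

lemma deriv_deriv_eq_of_eqOn_quadratic {F : ℝ → ℝ} {m a k : ℝ} {s : Set ℝ} (hs : IsOpen s)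
    (hF : s.EqOn F fun t => m + (a * t - k / 2 * t ^ 2)) {t : ℝ} (ht : t ∈ s) :
    deriv (deriv F) t = -k := by
  have hderiv : deriv (fun t => m + (a * t - k / 2 * t ^ 2)) = fun t => a - k * t := by
    refine deriv_eq fun t => ?_
    refine ((((hasDerivAt_id' t).const_mul a).fun_sub
      ((hasDerivAt_pow 2 t).const_mul (k / 2))).const_add m).congr_deriv ?_
    push_cast
    ring
  rw [(hF.eventuallyEq_of_mem (hs.mem_nhds ht)).deriv.deriv_eq, hderiv]
  simp

section STransform

lemma ereal_le_iff_forall_le_coe {a b : EReal} : a ≤ b ↔ ∀ r : ℝ, b ≤ r → a ≤ r :=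
  ⟨fun hab _ hbr => hab.trans hbr,
    fun h => EReal.le_of_forall_lt_iff_le.1 fun r hbr => h r hbr.le⟩

variable {V : Type*} [NormedAddCommGroup V] [InnerProductSpace ℝ V] {γ : ℝ} {f : V → EReal}

lemma SgammaE_le_coe_iff {y : V} {c : ℝ} :
    SgammaE γ f y ≤ c ↔ ∀ x, ((-(c + γ / 2 * ‖x - y‖ ^ 2) : ℝ) : EReal) ≤ f x := by
  refine iSup_le_iff.trans (forall_congr' fun x => ?_)
  rw [EReal.sub_le_iff_le_add (.inl (EReal.coe_ne_bot _)) (.inl (EReal.coe_ne_top _)),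
    EReal.neg_le, ← EReal.coe_add, ← EReal.coe_neg]

lemma SgammaE_SgammaE_le_coe_iff (hγ : γ ≠ 0) {x : V} {c : ℝ} :
    SgammaE γ (SgammaE γ f) x ≤ c ↔ ∀ (v : V) (b : ℝ),
      (∀ z, ((b + ⟪v, z⟫ - γ / 2 * ‖z‖ ^ 2 : ℝ) : EReal) ≤ f z) →
        b + ⟪v, x⟫ - γ / 2 * ‖x‖ ^ 2 ≤ c := by
  have hparabola (y z : V) (b : ℝ) : -(b + γ / 2 * ‖z - y‖ ^ 2) =
      -(b + γ / 2 * ‖y‖ ^ 2) + ⟪γ • y, z⟫ - γ / 2 * ‖z‖ ^ 2 := by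
    rw [norm_sub_sq_real, real_inner_smul_left, real_inner_comm]
    ring
  simp only [SgammaE_le_coe_iff, ereal_le_iff_forall_le_coe (b := SgammaE γ f _),
    EReal.coe_le_coe_iff]
  refine ⟨fun h v b hv => ?_, fun h y b hy => ?_⟩
  · have hsmul : γ • γ⁻¹ • v = v := smul_inv_smul₀ hγ v
    have hle := h (γ⁻¹ • v) (-(b + γ / 2 * ‖γ⁻¹ • v‖ ^ 2)) fun z => by
      rw [hparabola, hsmul]
      simpa using hv z
    rw [norm_sub_rev] at hle
    have := hparabola (γ⁻¹ • v) x 0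
    rw [hsmul] at this
    linarith
  · have hle := h (γ • y) (-(b + γ / 2 * ‖y‖ ^ 2)) fun z => hparabola y z b ▸ hy z
    rw [← hparabola, norm_sub_rev] at hle
    linarith

lemma SgammaE_SgammaE_nonneg (hγ : 0 ≤ γ) (hf : ∀ x, 0 ≤ f x) (x : V) :
    0 ≤ SgammaE γ (SgammaE γ f) x := by
  have hnonpos : SgammaE γ f x ≤ (0 : ℝ) := SgammaE_le_coe_iff.2 fun z =>
    (EReal.coe_nonpos.2 (neg_nonpos.2 (by positivity))).trans (hf z)
  refine le_iSup_of_le x ?_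
  simpa using hnonpos

/-- The epigraph of `x ↦ f x + (γ / 2) ‖x‖²`, in which the S-transform becomes a convex duality.
It is a subset of `V × ℝ` with the weak topology on `V`, and the paraboloid is moved to the other
side of the inequality to keep extended-real addition out of the definition. -/
def shiftedEpigraph (γ : ℝ) (f : V → EReal) : Set (WeakSpace ℝ V × ℝ) :=
  {e | f ((toWeakSpace ℝ V).symm e.1) ≤
    ((e.2 - γ / 2 * ‖(toWeakSpace ℝ V).symm e.1‖ ^ 2 : ℝ) : EReal)}

lemma mk_mem_shiftedEpigraph_iff {x : V} {s : ℝ} :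
    (toWeakSpace ℝ V x, s) ∈ shiftedEpigraph γ f ↔
      f x ≤ ((s - γ / 2 * ‖x‖ ^ 2 : ℝ) : EReal) :=
  Iff.rfl

lemma forall_mk_mem_shiftedEpigraph_iff_le_iff {x : V} {c : ℝ} :
    (∀ s, (toWeakSpace ℝ V x, s) ∈ shiftedEpigraph γ f ↔ c ≤ s) ↔
      f x = ((c - γ / 2 * ‖x‖ ^ 2 : ℝ) : EReal) := by
  simp only [mk_mem_shiftedEpigraph_iff]
  refine ⟨fun h => le_antisymm ((h c).2 le_rfl) (ereal_le_iff_forall_le_coe.2 fun r hr => ?_),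
    fun h s => by rw [h, EReal.coe_le_coe_iff, sub_le_sub_iff_right]⟩
  have := (h (r + γ / 2 * ‖x‖ ^ 2)).1 (by rwa [add_sub_cancel_right])
  exact EReal.coe_le_coe_iff.2 (sub_le_iff_le_add.2 this)

lemma mk_mem_shiftedEpigraph_of_le ⦃x : WeakSpace ℝ V⦄ ⦃s t : ℝ⦄
    (hx : (x, s) ∈ shiftedEpigraph γ f) (hst : s ≤ t) : (x, t) ∈ shiftedEpigraph γ f :=
  le_trans hx (EReal.coe_le_coe_iff.2 (sub_le_sub_right hst _))

lemma forall_mem_shiftedEpigraph_le_iff {ψ : V → ℝ} :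
    (∀ e ∈ shiftedEpigraph γ f, ψ ((toWeakSpace ℝ V).symm e.1) ≤ e.2) ↔
      ∀ x, ((ψ x - γ / 2 * ‖x‖ ^ 2 : ℝ) : EReal) ≤ f x := by
  simp only [ereal_le_iff_forall_le_coe (b := f _), EReal.coe_le_coe_iff]
  refine ⟨fun h x r hr => ?_, fun h e he => ?_⟩
  · have := h (toWeakSpace ℝ V x, r + γ / 2 * ‖x‖ ^ 2)
      (mk_mem_shiftedEpigraph_iff.2 (by rwa [add_sub_cancel_right]))
    exact sub_le_iff_le_add.2 this
  · exact sub_le_sub_iff_right _ |>.1 (h _ _ he)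

lemma quadratic_le_of_mem_shiftedEpigraph (hf : ∀ x, 0 ≤ f x) {e : WeakSpace ℝ V × ℝ}
    (he : e ∈ shiftedEpigraph γ f) : γ / 2 * ‖(toWeakSpace ℝ V).symm e.1‖ ^ 2 ≤ e.2 :=
  forall_mem_shiftedEpigraph_le_iff (ψ := fun x => γ / 2 * ‖x‖ ^ 2).2 (by simpa using hf) e he

/-- Since `‖x‖² = sup_y (2⟪y, x⟫ - ‖y‖²)`, the set is an intersection of preimages of the closed
epigraph of `f` under weakly continuous maps. -/
lemma isClosed_shiftedEpigraph (hγ : 0 ≤ γ)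
    (hf : LowerSemicontinuous fun x : WeakSpace ℝ V => f ((toWeakSpace ℝ V).symm x)) :
    IsClosed (shiftedEpigraph γ f) := by
  have hInter : shiftedEpigraph γ f = ⋂ y : V, {e | f ((toWeakSpace ℝ V).symm e.1) ≤
      ((e.2 - γ / 2 * (2 * ⟪y, (toWeakSpace ℝ V).symm e.1⟫ - ‖y‖ ^ 2) : ℝ) : EReal)} := by
    ext ⟨x, s⟩
    obtain ⟨x, rfl⟩ := (toWeakSpace ℝ V).surjective x
    simp only [mk_mem_shiftedEpigraph_iff, Set.mem_iInter, Set.mem_ofPred_eq,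
      LinearEquiv.symm_apply_apply]
    refine ⟨fun h y => h.trans (EReal.coe_le_coe_iff.2 ?_), fun h => ?_⟩
    · have hsq : 2 * ⟪y, x⟫ - ‖y‖ ^ 2 ≤ ‖x‖ ^ 2 := by
        linarith [norm_sub_sq_real y x, sq_nonneg ‖y - x‖]
      gcongr
    · convert h x using 3
      rw [real_inner_self_eq_norm_sq]
      ring
  rw [hInter]
  refine isClosed_iInter fun y => hf.isClosed_epigraph.preimage
    (continuous_fst.prodMk (continuous_coe_real_ereal.comp ?_))
  obtain ⟨φ, hφ⟩ := exists_strongDual_weakSpace_eq_inner y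
  simp only [← hφ]
  fun_prop

lemma exists_direction_eq_quadratic_of_notMem_extremePoints {x : V} {m : ℝ}
    (hconvex : Convex ℝ (shiftedEpigraph γ f)) (hm : f x = m)
    (hext : (toWeakSpace ℝ V x, m + γ / 2 * ‖x‖ ^ 2) ∉ (shiftedEpigraph γ f).extremePoints ℝ) :
    ∃ (ν : V) (a : ℝ), ν ≠ 0 ∧ ∀ t ∈ Set.Icc (-1 : ℝ) 1,
      f (x + t • ν) = ((m + (a * t - γ / 2 * ‖t • ν‖ ^ 2) : ℝ) : EReal) := by
  obtain ⟨ν, a, hν, hline⟩ := exists_direction_forall_mem_iff_of_notMem_extremePoints hconvex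
    mk_mem_shiftedEpigraph_of_le
    (forall_mk_mem_shiftedEpigraph_iff_le_iff.2 (by rwa [add_sub_cancel_right])) hext
  obtain ⟨ν, rfl⟩ := (toWeakSpace ℝ V).surjective ν
  refine ⟨ν, a - γ * ⟪x, ν⟫, (toWeakSpace ℝ V).map_ne_zero_iff.1 hν, fun t ht => ?_⟩
  have hlowest := hline t ht
  rw [← map_smul, ← map_add] at hlowest
  rw [forall_mk_mem_shiftedEpigraph_iff_le_iff.1 hlowest, norm_add_sq_real, real_inner_smul_right]
  congr 1
  ring

lemma exists_unit_direction_eq_quadratic_of_notMem_extremePoints {x : V} {m : ℝ}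
    (hconvex : Convex ℝ (shiftedEpigraph γ f)) (hm : f x = m)
    (hext : (toWeakSpace ℝ V x, m + γ / 2 * ‖x‖ ^ 2) ∉ (shiftedEpigraph γ f).extremePoints ℝ) :
    ∃ (ν : V) (a t₀ : ℝ), ‖ν‖ = 1 ∧ 0 < t₀ ∧ ∀ t ∈ Set.Ioo (-t₀) t₀,
      f (x + t • ν) = ((m + (a * t - γ / 2 * t ^ 2) : ℝ) : EReal) := by
  obtain ⟨ν, a, hν, hquad⟩ := exists_direction_eq_quadratic_of_notMem_extremePoints hconvex hm hext
  have hpos : 0 < ‖ν‖ := norm_pos_iff.2 hν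
  have hunit : ‖‖ν‖⁻¹ • ν‖ = 1 := norm_smul_inv_norm (𝕜 := ℝ) hν
  refine ⟨‖ν‖⁻¹ • ν, a * ‖ν‖⁻¹, ‖ν‖, hunit, hpos, fun t ht => ?_⟩
  have hscaled : t * ‖ν‖⁻¹ ∈ Set.Icc (-1 : ℝ) 1 := by
    rw [← div_eq_mul_inv, Set.mem_Icc, le_div_iff₀ hpos, div_le_one hpos]
    exact ⟨by linarith [ht.1], ht.2.le⟩
  rw [smul_smul, hquad _ hscaled, ← smul_smul, norm_smul, hunit, mul_one, Real.norm_eq_abs, sq_abs]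
  congr 1
  ring

variable [CompleteSpace V]

lemma shiftedEpigraph_SgammaE_SgammaE (hγ : 0 < γ) (hf : ∀ x, 0 ≤ f x) :
    shiftedEpigraph γ (SgammaE γ (SgammaE γ f)) = closedConvexHull ℝ (shiftedEpigraph γ f) := by
  have hminorant : ∀ e ∈ shiftedEpigraph γ f, 0 + (0 : StrongDual ℝ (WeakSpace ℝ V)) e.1 ≤ e.2 :=
    fun e he => by
      simpa using le_trans (by positivity) (quadratic_le_of_mem_shiftedEpigraph hf he)
  ext ⟨x, s⟩
  obtain ⟨x, rfl⟩ := (toWeakSpace ℝ V).surjective x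
  rw [mem_closedConvexHull_iff_forall_affine_minorant mk_mem_shiftedEpigraph_of_le hminorant,
    mk_mem_shiftedEpigraph_iff, SgammaE_SgammaE_le_coe_iff hγ.ne']
  simp only [← forall_mem_shiftedEpigraph_le_iff (ψ := fun z => _ + ⟪_, z⟫), sub_le_sub_iff_right]
  refine ⟨fun h φ b hφb => ?_, fun h v b hvb => ?_⟩
  · obtain ⟨v, hv⟩ := exists_inner_eq_strongDual_weakSpace φ
    simp only [hv] at hφb ⊢
    exact h v b hφb
  · obtain ⟨φ, hφ⟩ := exists_strongDual_weakSpace_eq_inner v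
    simp only [← hφ] at hvb
    exact hφ (toWeakSpace ℝ V x) ▸ h φ b hvb

lemma convex_shiftedEpigraph_SgammaE_SgammaE (hγ : 0 < γ) (hf : ∀ x, 0 ≤ f x) :
    Convex ℝ (shiftedEpigraph γ (SgammaE γ (SgammaE γ f))) :=
  shiftedEpigraph_SgammaE_SgammaE hγ hf ▸ convex_closedConvexHull

lemma exists_isCompact_mem_nhdsWithin_shiftedEpigraph (hγ : 0 < γ) (hf : ∀ x, 0 ≤ f x)
    (p : WeakSpace ℝ V × ℝ) : ∃ C, IsCompact C ∧ C ∈ 𝓝[shiftedEpigraph γ f] p := by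
  refine ⟨(toWeakSpace ℝ V '' Metric.closedBall 0 √(2 / γ * (p.2 + 1))) ×ˢ Set.Icc 0 (p.2 + 1),
    (isCompact_toWeakSpace_closedBall _).prod isCompact_Icc, ?_⟩
  have hnear : ∀ᶠ e : WeakSpace ℝ V × ℝ in 𝓝 p, e.2 < p.2 + 1 :=
    continuous_snd.continuousAt.eventually_lt_const (lt_add_one p.2)
  filter_upwards [mem_nhdsWithin_of_mem_nhds hnear, self_mem_nhdsWithin] with e he heE
  have hquad := quadratic_le_of_mem_shiftedEpigraph hf heE
  refine ⟨⟨(toWeakSpace ℝ V).symm e.1, ?_, by simp⟩, le_trans (by positivity) hquad, he.le⟩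
  rw [mem_closedBall_zero_iff]
  refine Real.le_sqrt_of_sq_le ?_
  rw [div_mul_eq_mul_div, le_div_iff₀ hγ]
  linarith

lemma notMem_extremePoints_shiftedEpigraph (hγ : 0 < γ) (hf : ∀ x, 0 ≤ f x)
    (hlsc : LowerSemicontinuous fun x : WeakSpace ℝ V => f ((toWeakSpace ℝ V).symm x))
    {p : WeakSpace ℝ V × ℝ} (hp : p ∉ shiftedEpigraph γ f) :
    p ∉ (shiftedEpigraph γ (SgammaE γ (SgammaE γ f))).extremePoints ℝ := by
  intro hext
  obtain ⟨C, hC, hCp⟩ := exists_isCompact_mem_nhdsWithin_shiftedEpigraph hγ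
    (SgammaE_SgammaE_nonneg hγ.le hf) p
  rw [shiftedEpigraph_SgammaE_SgammaE hγ hf] at hext hCp
  exact hp (mem_of_mem_extremePoints_closedConvexHull (isClosed_shiftedEpigraph hγ.le hlsc) hext
    hC hCp)

end STransform

theorem statement9_general {V : Type*} [NormedAddCommGroup V] [InnerProductSpace ℝ V]
    [CompleteSpace V]
    (f : V → ℝ≥0∞) (hwlsc : LowerSemicontinuous (α := WeakSpace ℝ V) f)
    (γ : ℝ) (hγ : 0 < γ) (x₀ : V) (hx₀ : Sgamma2 γ f x₀ < (f x₀ : EReal)) :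
    ∃ (ν : V) (a t₀ : ℝ), ‖ν‖ = 1 ∧ 0 < t₀ ∧
      (∀ t ∈ Set.Ioo (-t₀) t₀,
        Sgamma2 γ f (x₀ + t • ν) = Sgamma2 γ f x₀ + ((a * t - γ / 2 * t ^ 2 : ℝ) : EReal)) ∧
      (∀ t ∈ Set.Ioo (-t₀) t₀,
        deriv (deriv (fun s : ℝ => (Sgamma2 γ f (x₀ + s • ν)).toReal)) t = -γ) := by
  have hf : ∀ x, (0 : EReal) ≤ f x := fun x => EReal.coe_ennreal_nonneg _
  have hlsc : LowerSemicontinuous fun x : WeakSpace ℝ V => (f ((toWeakSpace ℝ V).symm x) : EReal) :=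
    continuous_coe_ennreal_ereal.comp_lowerSemicontinuous hwlsc
      EReal.coe_ennreal_strictMono.monotone
  obtain ⟨m, hm⟩ : ∃ m : ℝ, (m : EReal) = Sgamma2 γ f x₀ :=
    ⟨_, EReal.coe_toReal hx₀.ne_top
      (EReal.bot_lt_zero.trans_le (SgammaE_SgammaE_nonneg hγ.le hf x₀)).ne'⟩
  have hmem : (toWeakSpace ℝ V x₀, m + γ / 2 * ‖x₀‖ ^ 2) ∉
      shiftedEpigraph γ fun x => (f x : EReal) := by
    rw [mk_mem_shiftedEpigraph_iff, add_sub_cancel_right, hm]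
    exact hx₀.not_ge
  obtain ⟨ν, a, t₀, hν, ht₀, hquad⟩ := exists_unit_direction_eq_quadratic_of_notMem_extremePoints
    (convex_shiftedEpigraph_SgammaE_SgammaE hγ hf) hm.symm
    (notMem_extremePoints_shiftedEpigraph hγ hf hlsc hmem)
  refine ⟨ν, a, t₀, hν, ht₀, fun t ht => ?_, fun t ht => ?_⟩
  · rw [← hm, ← EReal.coe_add]
    exact hquad t ht
  · exact deriv_deriv_eq_of_eqOn_quadratic isOpen_Ioo
      (fun r hr => congrArg EReal.toReal (hquad r hr)) ht

/-- If `f : V → [0,∞]` is weakly l.s.c., `γ > 0` and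
`S_γ²(f)(x₀) < f(x₀)`, then there are a unit vector `ν`, a slope `a` and `t₀ > 0` such that
`S_γ²(f)(x₀ + tν) = S_γ²(f)(x₀) + a·t - (γ/2)t²` on `(-t₀,t₀)`; in particular this function of
`t` has second derivative `-γ` there. -/
theorem statement9 {V : Type*} [NormedAddCommGroup V] [InnerProductSpace ℝ V]
    [CompleteSpace V] [TopologicalSpace.SeparableSpace V]
    (f : V → ℝ≥0∞) (hwlsc : LowerSemicontinuous (α := WeakSpace ℝ V) f)
    (γ : ℝ) (hγ : 0 < γ) (x₀ : V) (hx₀ : Sgamma2 γ f x₀ < (f x₀ : EReal)) :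
    ∃ (ν : V) (a t₀ : ℝ), ‖ν‖ = 1 ∧ 0 < t₀ ∧
      (∀ t ∈ Set.Ioo (-t₀) t₀,
        Sgamma2 γ f (x₀ + t • ν) = Sgamma2 γ f x₀ + ((a * t - γ / 2 * t ^ 2 : ℝ) : EReal)) ∧
      (∀ t ∈ Set.Ioo (-t₀) t₀,
        deriv (deriv (fun s : ℝ => (Sgamma2 γ f (x₀ + s • ν)).toReal)) t = -γ) :=
  statement9_general f hwlsc γ hγ x₀ hx₀
end
end
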